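/- For every fixed constant B < ∞ there is an absolute constant C < ∞ such that, for all sufficiently large n and every 1 ≤ k ≤ n, the half-lazy k-column transvection walk satisfies τ_mix(Q_{n,k}) ≤ C·n·k·log n (with C independent of n and k and universal). -/

import Mathlib

open Finset

noncomputable section

def tvDist {X : Type*} [Fintype X] (f g : X → ℝ) : ℝ := (1/2) * ∑ x, |f x - g x|

open Classical in
def unifOn {X : Type*} [Fintype X] (G : Set X) : X → ℝ :=
  fun x => if x ∈ G then (Nat.card G : ℝ)⁻¹ else 0

def mixTime {X : Type*} [Fintype X] [DecidableEq X] (Q : Matrix X X ℝ) (π : X → ℝ)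
    (start : Set X) : ℕ :=
  sInf {t : ℕ | ∀ x ∈ start, tvDist ((Q ^ t) x) π ≤ 1 / 4}

abbrev TState (n k : ℕ) := Fin n → (Fin k → ZMod 2)

def Stief (n k : ℕ) : Set (TState n k) :=
  {z | Submodule.span (ZMod 2) (Set.range z) = ⊤}

def transP (n k : ℕ) : Matrix (TState n k) (TState n k) ℝ :=
  fun z w => (∑ a : Fin n, ∑ b : Fin n,
    if a ≠ b ∧ w = Function.update z b (z b + z a) then (1 : ℝ) else 0) / ((n : ℝ) * ((n : ℝ) - 1))

def transQ (n k : ℕ) : Matrix (TState n k) (TState n k) ℝ :=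
  (2⁻¹ : ℝ) • ((1 : Matrix (TState n k) (TState n k) ℝ) + transP n k)


def hh (x : ℝ) : ℝ := x * Real.log x

lemma hh_zero : hh 0 = 0 := by simp [hh]

lemma convex_hh : ConvexOn ℝ (Set.Ici 0) hh := Real.convexOn_mul_log

def ent1 {X : Type*} [Fintype X] (σ : X → X) (μ : X → ℝ) : ℝ :=
  ∑ z, ((hh (μ z) + hh (μ (σ z))) / 2 - hh ((μ z + μ (σ z)) / 2))

lemma hh_mid {a b : ℝ} (ha : 0 ≤ a) (hb : 0 ≤ b) : hh ((a + b) / 2) ≤ (hh a + hh b) / 2 := by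
  have := convex_hh.2 (Set.mem_Ici.2 ha) (Set.mem_Ici.2 hb) (by norm_num : (0:ℝ) ≤ 1/2)
    (by norm_num : (0:ℝ) ≤ 1/2) (by norm_num)
  simp only [smul_eq_mul] at this
  have e : (1/2 * a + 1/2 * b) = (a+b)/2 := by ring
  rw [e] at this; linarith

lemma ent1_nonneg {X : Type*} [Fintype X] (σ : X → X) (μ : X → ℝ) (h : ∀ z, 0 ≤ μ z) :
    0 ≤ ent1 σ μ := by
  unfold ent1
  apply Finset.sum_nonneg
  intro z _
  have := hh_mid (h z) (h (σ z))
  linarith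

lemma gibbs1 {a p s t : ℝ} (ha : 0 ≤ a) (hp0 : 0 ≤ p) (hp : a ≠ 0 → 0 < p) (hs : 0 < s) (ht : 0 < t) :
    a * Real.log p ≤ hh a + a * Real.log (t / s) + (p * s / t - a) := by
  by_cases h0 : a = 0
  · subst h0; simp [hh]; positivity
  have ha' : 0 < a := lt_of_le_of_ne ha (Ne.symm h0)
  have hp' := hp h0
  have h1 := Real.log_le_sub_one_of_pos (show 0 < p * s / (a * t) by positivity)
  rw [Real.log_div (by positivity) (by positivity), Real.log_mul (by positivity) (by positivity),
    Real.log_mul (by positivity) (by positivity)] at h1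
  have h2 := mul_le_mul_of_nonneg_left h1 ha
  rw [Real.log_div ht.ne' hs.ne']
  have e : a * (p * s / (a * t) - 1) = p * s / t - a := by field_simp
  rw [e] at h2
  unfold hh; nlinarith

lemma two_point {a b p q : ℝ} (ha : 0 ≤ a) (hb : 0 ≤ b) (hp0 : 0 ≤ p) (hq0 : 0 ≤ q)
    (hp : a ≠ 0 → 0 < p) (hq : b ≠ 0 → 0 < q) :
    a * Real.log p + b * Real.log q ≤
      hh a + hh b - 2 * hh ((a + b) / 2) + (a + b) * Real.log ((p + q) / 2) := by
  by_cases h0 : a + b = 0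
  · have : a = 0 := by linarith
    have : b = 0 := by linarith
    subst_vars; simp [hh]
  have hs : 0 < a + b := lt_of_le_of_ne (by linarith) (Ne.symm h0)
  have ht : 0 < p + q := by
    by_cases h1 : a = 0
    · have : b ≠ 0 := by rintro rfl; simp [h1] at h0
      have := hq this; linarith
    · have := hp h1; linarith
  have h1 := gibbs1 ha hp0 hp hs ht
  have h2 := gibbs1 hb hq0 hq hs ht
  have e : p * (a+b) / (p+q) - a + (q * (a+b)/(p+q) - b) = 0 := by field_simp; ring
  have e2 : Real.log ((p+q)/(a+b)) = Real.log ((p+q)/2) - Real.log ((a+b)/2) := by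
    rw [← Real.log_div (by positivity) (by positivity)]; congr 1; field_simp
  rw [e2] at h1 h2
  unfold hh at *
  nlinarith

/-- Donsker--Varadhan along one involution -/
lemma DV1 {X : Type*} [Fintype X] [DecidableEq X] {σ : X → X} (hσ : Function.Involutive σ)
    (Γ : Finset X) (hΓ : ∀ z, σ z ∈ Γ ↔ z ∈ Γ) (μ g : X → ℝ) (hμ : ∀ z, 0 ≤ μ z)
    (hg : ∀ z, 0 ≤ g z) (hpos : ∀ z ∈ Γ, μ z ≠ 0 → 0 < g z) :
    ∑ z ∈ Γ, μ z * Real.log (g z) ≤ ent1 σ μ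
      + ∑ z ∈ Γ, μ z * Real.log ((g z + g (σ z)) / 2) := by
  have inv : ∀ F : X → ℝ, ∑ z ∈ Γ, F (σ z) = ∑ z ∈ Γ, F z := by
    intro F
    apply Finset.sum_nbij' σ σ
    · intro z hz; exact (hΓ z).2 hz
    · intro z hz; exact (hΓ z).2 hz
    · intro z _; exact hσ z
    · intro z _; exact hσ z
    · intro z _; rfl
  have h1 : ∀ z ∈ Γ, μ z * Real.log (g z) + μ (σ z) * Real.log (g (σ z)) ≤
      2 * ((hh (μ z) + hh (μ (σ z))) / 2 - hh ((μ z + μ (σ z)) / 2)) +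
      (μ z * Real.log ((g z + g (σ z)) / 2) +
        μ (σ z) * Real.log ((g (σ z) + g (σ (σ z))) / 2)) := by
    intro z hz
    have := two_point (hμ z) (hμ (σ z)) (hg z) (hg (σ z)) (hpos z hz) (hpos _ ((hΓ z).2 hz))
    rw [hσ z, add_comm (g (σ z)) (g z)]
    linarith
  have h2 := Finset.sum_le_sum h1
  rw [Finset.sum_add_distrib, Finset.sum_add_distrib, Finset.sum_add_distrib, ← Finset.mul_sum,
    inv (fun z => μ z * Real.log (g z)),
    inv (fun z => μ z * Real.log ((g z + g (σ z)) / 2))] at h2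
  have h3 : ∑ z ∈ Γ, ((hh (μ z) + hh (μ (σ z))) / 2 - hh ((μ z + μ (σ z)) / 2)) ≤ ent1 σ μ := by
    unfold ent1
    apply Finset.sum_le_sum_of_subset_of_nonneg (Finset.subset_univ _)
    intro z _ _
    have := hh_mid (hμ z) (hμ (σ z))
    linarith
  linarith

def sg {n k : ℕ} (a b : Fin n) (z : TState n k) : TState n k := Function.update z b (z b + z a)

lemma zmod2_add_self {k : ℕ} (v : Fin k → ZMod 2) : v + v = 0 := by
  ext i; exact CharTwo.add_self_eq_zero (v i)

lemma sg_invol {n k : ℕ} {a b : Fin n} (h : a ≠ b) :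
    Function.Involutive (sg a b : TState n k → TState n k) := by
  intro z
  ext i : 1
  by_cases hi : i = b
  · subst hi; simp [sg, Function.update_of_ne h, add_assoc, zmod2_add_self]
  · simp [sg, Function.update_of_ne hi]

def EntTot {n k : ℕ} (μ : TState n k → ℝ) : ℝ :=
  ∑ p ∈ (univ : Finset (Fin n)).offDiag, ent1 (sg p.1 p.2) μ

def stepf {n k : ℕ} (μ : TState n k → ℝ) (w : TState n k) : ℝ :=
  (μ w + (∑ p ∈ (univ : Finset (Fin n)).offDiag, μ (sg p.1 p.2 w)) / ((n : ℝ) * ((n : ℝ) - 1))) / 2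

lemma offDiag_sum {n : ℕ} (F : Fin n → Fin n → ℝ) :
    ∑ p ∈ (univ : Finset (Fin n)).offDiag, F p.1 p.2 = ∑ a, ∑ b, if a ≠ b then F a b else 0 := by
  rw [← Finset.sum_product', ← Finset.sum_filter]
  apply Finset.sum_congr _ (fun _ _ => rfl)
  ext p; simp

lemma sum_invol {X : Type*} [Fintype X] {σ : X → X} (hσ : Function.Involutive σ) (F : X → ℝ) :
    ∑ z, F (σ z) = ∑ z, F z := Equiv.sum_comp hσ.toPerm F

lemma transQ_apply {n k : ℕ} (z w : TState n k) : transQ n k z w = 2⁻¹ * ((if z = w then (1:ℝ) else 0) +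
      (∑ a : Fin n, ∑ b : Fin n, if a ≠ b ∧ w = Function.update z b (z b + z a) then (1 : ℝ) else 0) / ((n : ℝ) * ((n : ℝ) - 1))) := by
  have h : transP n k z w = (∑ a : Fin n, ∑ b : Fin n, if a ≠ b ∧ w = Function.update z b (z b + z a) then (1 : ℝ) else 0) / ((n : ℝ) * ((n : ℝ) - 1)) := rfl
  rw [← h, transQ, Matrix.smul_apply, Matrix.add_apply, Matrix.one_apply, smul_eq_mul]

lemma Qpow_succ {n k : ℕ} (t : ℕ) (x : TState n k) :
    (transQ n k ^ (t+1)) x = stepf ((transQ n k ^ t) x) := by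
  ext w
  rw [pow_succ, Matrix.mul_apply]
  set μ := (transQ n k ^ t) x with hμ
  unfold stepf
  simp only [transQ_apply]
  have : ∀ z, μ z * (2⁻¹ * ((if z = w then (1:ℝ) else 0) +
      (∑ a : Fin n, ∑ b : Fin n, if a ≠ b ∧ w = Function.update z b (z b + z a) then (1 : ℝ) else 0) / ((n : ℝ) * ((n : ℝ) - 1))))
      = (if z = w then μ z else 0) / 2 +
        (∑ a : Fin n, ∑ b : Fin n, if a ≠ b then (if w = sg a b z then μ z else 0) else 0) / ((n : ℝ) * ((n : ℝ) - 1)) / 2 := by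
    intro z
    have e : (∑ a : Fin n, ∑ b : Fin n, if a ≠ b then (if w = sg a b z then μ z else 0) else 0)
      = μ z * (∑ a : Fin n, ∑ b : Fin n, if a ≠ b ∧ w = Function.update z b (z b + z a) then (1 : ℝ) else 0) := by
      simp_rw [Finset.mul_sum]
      apply Finset.sum_congr rfl; intro a _
      apply Finset.sum_congr rfl; intro b _
      by_cases h1 : a ≠ b <;> by_cases h2 : w = sg a b z
      · have h2' := h2
        unfold sg at h2'
        rw [if_pos h1, if_pos h2, if_pos ⟨h1, h2'⟩, mul_one]
      · have h2' := h2
        unfold sg at h2'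
        rw [if_pos h1, if_neg h2, if_neg (fun h => h2' h.2), mul_zero]
      · rw [if_neg h1, if_neg (fun h => h1 h.1), mul_zero]
      · rw [if_neg h1, if_neg (fun h => h1 h.1), mul_zero]
    rw [e]
    split_ifs <;> ring
  simp_rw [this]
  rw [Finset.sum_add_distrib, ← Finset.sum_div, ← Finset.sum_div, ← Finset.sum_div]
  rw [Finset.sum_ite_eq' , if_pos (mem_univ _), offDiag_sum (fun a b => μ (sg a b w))]
  rw [Finset.sum_comm]
  have : ∀ a : Fin n, (∑ z, ∑ b : Fin n, if a ≠ b then (if w = sg a b z then μ z else 0) else 0)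
     = ∑ b, if a ≠ b then μ (sg a b w) else 0 := by
    intro a
    rw [Finset.sum_comm]
    apply Finset.sum_congr rfl; intro b _
    by_cases h : a ≠ b
    · simp only [if_pos h]
      rw [← sum_invol (sg_invol h)]
      simp only [sg_invol h _]
      simp
    · simp [h]
  simp_rw [this]
  ring

lemma card_offDiag (n : ℕ) : (((univ : Finset (Fin n)).offDiag.card : ℕ) : ℝ) = (n:ℝ) * ((n:ℝ) - 1) := by
  rw [Finset.offDiag_card, Finset.card_fin, Nat.cast_sub (Nat.le_mul_self n)]
  push_cast; ring

lemma step_expect {n k : ℕ} (μ F : TState n k → ℝ) :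
    ∑ w, stepf μ w * F w = (∑ w, μ w * F w +
      (∑ p ∈ (univ : Finset (Fin n)).offDiag, ∑ z, μ z * F (sg p.1 p.2 z)) / ((n : ℝ) * ((n : ℝ) - 1))) / 2 := by
  unfold stepf
  have : ∀ p ∈ (univ : Finset (Fin n)).offDiag, ∑ z, μ z * F (sg p.1 p.2 z) =
     ∑ z, μ (sg p.1 p.2 z) * F z := by
    intro p hp
    have h : p.1 ≠ p.2 := by simpa using hp
    rw [← sum_invol (sg_invol h)]
    simp only [sg_invol h _]
  rw [Finset.sum_congr rfl this, Finset.sum_comm]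
  simp_rw [← Finset.sum_mul]
  rw [Finset.sum_div, ← Finset.sum_add_distrib, Finset.sum_div]
  apply Finset.sum_congr rfl; intro w _; ring

lemma stepf_nonneg {n k : ℕ} (hn : 2 ≤ n) (μ : TState n k → ℝ) (h : ∀ z, 0 ≤ μ z) (z) : 0 ≤ stepf μ z := by
  have : (2:ℝ) ≤ n := by exact_mod_cast hn
  unfold stepf
  have h1 : 0 ≤ ∑ p ∈ (univ : Finset (Fin n)).offDiag, μ (sg p.1 p.2 z) :=
    Finset.sum_nonneg (fun p _ => h _)
  have h2 : 0 ≤ (n : ℝ) * ((n : ℝ) - 1) := by nlinarith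
  have := h z
  positivity

lemma stepf_sum {n k : ℕ} (hn : 2 ≤ n) (μ : TState n k → ℝ) : ∑ z, stepf μ z = ∑ z, μ z := by
  have hn' : (2:ℝ) ≤ n := by exact_mod_cast hn
  have := step_expect μ (fun _ => 1)
  simp only [mul_one] at this
  rw [this, Finset.sum_const, nsmul_eq_mul, card_offDiag]
  have h2 : (n : ℝ) * ((n : ℝ) - 1) ≠ 0 := by nlinarith
  rw [mul_div_cancel_left₀ _ h2]; ring

def HH {X : Type*} [Fintype X] (μ : X → ℝ) : ℝ := ∑ z, hh (μ z)

lemma ent_step {n k : ℕ} (hn : 2 ≤ n) (μ : TState n k → ℝ) (h : ∀ z, 0 ≤ μ z) :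
    HH (stepf μ) ≤ HH μ - EntTot μ / ((n : ℝ) * ((n : ℝ) - 1)) := by
  have hn' : (2:ℝ) ≤ n := by exact_mod_cast hn
  have h2 : 0 < (n : ℝ) * ((n : ℝ) - 1) := by nlinarith
  set M := (n : ℝ) * ((n : ℝ) - 1) with hM
  have key : ∀ w, hh (stepf μ w) ≤ ∑ p ∈ (univ : Finset (Fin n)).offDiag, M⁻¹ * hh ((μ w + μ (sg p.1 p.2 w)) / 2) := by
    intro w
    have := convex_hh.map_sum_le (t := (univ : Finset (Fin n)).offDiag) (w := fun _ => M⁻¹)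
      (p := fun p => (μ w + μ (sg p.1 p.2 w)) / 2) (fun _ _ => by positivity)
      (by rw [Finset.sum_const, nsmul_eq_mul, card_offDiag, ← hM]; exact mul_inv_cancel₀ h2.ne')
      (fun p _ => Set.mem_Ici.2 (by have := h w; have := h (sg p.1 p.2 w); positivity))
    simp only [smul_eq_mul] at this
    have e : stepf μ w = ∑ p ∈ (univ : Finset (Fin n)).offDiag, M⁻¹ * ((μ w + μ (sg p.1 p.2 w)) / 2) := by
      rw [← Finset.mul_sum, ← Finset.sum_div, Finset.sum_add_distrib, Finset.sum_const, nsmul_eq_mul, card_offDiag]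
      unfold stepf
      rw [← hM]; field_simp
    rw [e]; exact this
  have h3 : HH (stepf μ) ≤ _ := Finset.sum_le_sum (fun w _ => key w)
  rw [Finset.sum_comm] at h3
  refine h3.trans ?_
  have h4 : ∀ p ∈ (univ : Finset (Fin n)).offDiag, ∑ w, M⁻¹ * hh ((μ w + μ (sg p.1 p.2 w)) / 2)
      = M⁻¹ * (HH μ - ent1 (sg p.1 p.2) μ) := by
    intro p hp
    have h : p.1 ≠ p.2 := by simpa using hp
    rw [← Finset.mul_sum]
    congr 1
    unfold ent1 HH
    rw [Finset.sum_sub_distrib, ← Finset.sum_div, Finset.sum_add_distrib,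
      sum_invol (sg_invol h) (fun z => hh (μ z))]
    ring
  rw [Finset.sum_congr rfl h4, ← Finset.mul_sum, Finset.sum_sub_distrib, Finset.sum_const, nsmul_eq_mul, card_offDiag, ← hM]
  unfold EntTot
  apply le_of_eq; field_simp

lemma psi_ge {R : ℝ} (hR : 0 ≤ R) : (Real.sqrt R - 1)^2 ≤ hh R - R + 1 := by
  by_cases h0 : R = 0
  · subst h0; simp [hh]
  have hR' : 0 < R := lt_of_le_of_ne hR (Ne.symm h0)
  set x := Real.sqrt R with hx
  have hx0 : 0 < x := Real.sqrt_pos.2 hR'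
  have hR2 : R = x^2 := (Real.sq_sqrt hR).symm
  have h1 := Real.one_sub_inv_le_log_of_pos hx0
  unfold hh
  rw [hR2, Real.log_pow]
  have h2 := mul_le_mul_of_nonneg_left h1 (show 0 ≤ 2 * x^2 by positivity)
  have e : 2 * x^2 * (1 - x⁻¹) = 2*x^2 - 2*x := by field_simp
  rw [e] at h2
  push_cast
  nlinarith

lemma abs_sub_one_le {R : ℝ} (hR : 0 ≤ R) : |R - 1| ≤ 8 * (hh R - R + 1) + (R + 1) / 8 := by
  have h1 := psi_ge hR
  set x := Real.sqrt R with hx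
  have hx0 : 0 ≤ x := Real.sqrt_nonneg _
  have hR2 : R = x^2 := (Real.sq_sqrt hR).symm
  have : |R - 1| ≤ 8 * (x-1)^2 + (R+1)/8 := by
    rw [hR2, abs_le]; constructor <;> nlinarith [sq_nonneg (8*(x-1) + (x+1)/2), sq_nonneg (8*(x-1) - (x+1)/2), sq_nonneg (x-1), sq_nonneg (16*(x-1) + (x+1)), sq_nonneg (16*(x-1)-(x+1))]
  linarith

/-- weak Pinsker for the uniform measure on a finset -/
lemma pinsker {X : Type*} [Fintype X] [DecidableEq X] (G : Finset X) (μ : X → ℝ) (h0 : ∀ z, 0 ≤ μ z)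
    (hs : ∑ z, μ z = 1) (hG : ∀ z, z ∉ G → μ z = 0) (hD : HH μ + Real.log G.card ≤ 1/64) :
    tvDist μ (fun z => if z ∈ G then (G.card : ℝ)⁻¹ else 0) ≤ 3/16 := by
  have hne : G.Nonempty := by
    by_contra h
    rw [Finset.not_nonempty_iff_eq_empty] at h
    subst h
    simp at hG
    simp [hG] at hs
  have hc : (0:ℝ) < G.card := by exact_mod_cast hne.card_pos
  set c : ℝ := (G.card : ℝ)
  have hsG : ∑ z ∈ G, μ z = 1 := by
    rw [← hs]; apply Finset.sum_subset (Finset.subset_univ _); intro z _ hz; exact hG z hz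
  have hHG : ∑ z ∈ G, hh (μ z) = HH μ := by
    apply Finset.sum_subset (Finset.subset_univ _); intro z _ hz; rw [hG z hz, hh_zero]
  unfold tvDist
  have e1 : ∑ z, |μ z - (if z ∈ G then c⁻¹ else 0)| = ∑ z ∈ G, |μ z - c⁻¹| := by
    symm
    rw [← Finset.sum_subset (Finset.subset_univ G)]
    · apply Finset.sum_congr rfl; intro z hz; rw [if_pos hz]
    · intro z _ hz; rw [if_neg hz, hG z hz]; simp
  rw [e1]
  have key : ∀ z ∈ G, |μ z - c⁻¹| ≤ 8 * (hh (μ z) + μ z * Real.log c - μ z + c⁻¹) + (μ z + c⁻¹)/8 := by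
    intro z _
    have := abs_sub_one_le (R := c * μ z) (mul_nonneg hc.le (h0 z))
    have e : |μ z - c⁻¹| = c⁻¹ * |c * μ z - 1| := by
      rw [← abs_of_pos (inv_pos.2 hc), ← abs_mul, abs_of_pos (inv_pos.2 hc)]; congr 1; field_simp
    have e3 : c⁻¹ * hh (c * μ z) = hh (μ z) + μ z * Real.log c := by
      unfold hh
      by_cases hz : μ z = 0
      · simp [hz]
      · rw [Real.log_mul hc.ne' hz]; field_simp; ring
    rw [e]
    refine (mul_le_mul_of_nonneg_left this (inv_pos.2 hc).le).trans (le_of_eq ?_)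
    rw [← e3]; field_simp
  have h5 := Finset.sum_le_sum key
  have e5 : ∑ z ∈ G, (8 * (hh (μ z) + μ z * Real.log c - μ z + c⁻¹) + (μ z + c⁻¹)/8)
    = 8 * (HH μ + Real.log c) + 1/4 := by
    simp only [Finset.sum_add_distrib, Finset.sum_sub_distrib, ← Finset.mul_sum, ← Finset.sum_div, ← Finset.sum_mul, hsG, hHG, Finset.sum_const, nsmul_eq_mul]
    rw [mul_inv_cancel₀ hc.ne']; ring
  rw [e5] at h5
  linarith

lemma contract_iter (D : ℕ → ℝ) (r e : ℝ) (hr1 : r ≤ 1) 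
    (h : ∀ t, D (t+1) ≤ D t - r * (D t - e)) (t : ℕ) : D t ≤ e + (1 - r)^t * (D 0 - e) := by
  induction t with
  | zero => simp
  | succ t ih =>
    have := h t
    have h2 := mul_le_mul_of_nonneg_left ih (sub_nonneg.2 hr1)
    rw [pow_succ]; nlinarith

lemma Qpow_nonneg {n k : ℕ} (hn : 2 ≤ n) (t : ℕ) (x z : TState n k) : 0 ≤ (transQ n k ^ t) x z := by
  induction t generalizing z with
  | zero => simp [Matrix.one_apply]; split_ifs <;> norm_num
  | succ t ih => rw [Qpow_succ]; exact stepf_nonneg hn _ ih z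

lemma Qpow_sum {n k : ℕ} (hn : 2 ≤ n) (t : ℕ) (x : TState n k) : ∑ z, (transQ n k ^ t) x z = 1 := by
  induction t with
  | zero => simp [Matrix.one_apply]
  | succ t ih => rw [Qpow_succ, stepf_sum hn, ih]

lemma Qpow_supp {n k : ℕ} (Γ : TState n k → Prop) (hΓ : ∀ a b z, a ≠ b → Γ (sg a b z) → Γ z)
    (t : ℕ) (x z : TState n k) (hx : Γ x) (hz : ¬ Γ z) : (transQ n k ^ t) x z = 0 := by
  induction t generalizing z with
  | zero => 
    have : x ≠ z := by rintro rfl; exact hz hx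
    simp [Matrix.one_apply, this]
  | succ t ih =>
    rw [Qpow_succ]; unfold stepf
    rw [ih z hz, Finset.sum_eq_zero]; simp
    intro p hp
    have h : p.1 ≠ p.2 := by simpa using hp
    exact ih _ (fun h' => hz (hΓ _ _ _ h h'))


def av {ι : Type*} [Fintype ι] (F : ι → ℝ) : ℝ := (∑ i, F i) / (Fintype.card ι : ℝ)

lemma av_mono {ι : Type*} [Fintype ι] {F G : ι → ℝ} (h : ∀ i, F i ≤ G i) : av F ≤ av G := by
  unfold av; gcongr; exact h _

lemma av_nonneg {ι : Type*} [Fintype ι] {F : ι → ℝ} (h : ∀ i, 0 ≤ F i) : 0 ≤ av F := by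
  unfold av; have := Finset.sum_nonneg (fun i (_ : i ∈ univ) => h i); positivity

lemma av_pos {ι : Type*} [Fintype ι] {F : ι → ℝ} (h : ∀ i, 0 ≤ F i) (i : ι) (hi : 0 < F i) : 0 < av F := by
  unfold av
  have : 0 < ∑ i, F i := Finset.sum_pos' (fun i _ => h i) ⟨i, mem_univ _, hi⟩
  have : Nonempty ι := ⟨i⟩
  have : 0 < Fintype.card ι := Fintype.card_pos
  positivity

lemma av_add {ι : Type*} [Fintype ι] (F G : ι → ℝ) : av (fun i => F i + G i) = av F + av G := by
  unfold av; rw [Finset.sum_add_distrib, add_div]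

lemma av_div {ι : Type*} [Fintype ι] (F : ι → ℝ) (c : ℝ) : av (fun i => F i / c) = av F / c := by
  unfold av; rw [← Finset.sum_div]; ring

lemma av_mul {ι : Type*} [Fintype ι] (F : ι → ℝ) (c : ℝ) : av (fun i => F i * c) = av F * c := by
  unfold av; rw [← Finset.sum_mul]; ring

lemma av_const {ι : Type*} [Fintype ι] [Nonempty ι] (c : ℝ) : av (fun _ : ι => c) = c := by
  unfold av; rw [Finset.sum_const, nsmul_eq_mul, Finset.card_univ]; field_simp

lemma av_comm {ι κ : Type*} [Fintype ι] [Fintype κ] (F : ι → κ → ℝ) :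
    av (fun i => av (fun j => F i j)) = av (fun j => av (fun i => F i j)) := by
  unfold av; rw [← Finset.sum_div, ← Finset.sum_div, Finset.sum_comm]; ring

lemma av_equiv {ι κ : Type*} [Fintype ι] [Fintype κ] (e : ι ≃ κ) (F : κ → ℝ) :
    av (fun i => F (e i)) = av F := by
  unfold av; rw [Equiv.sum_comp e, Fintype.card_congr e]

lemma av_shift {ι : Type*} [Fintype ι] [AddGroup ι] (F : ι → ℝ) (c : ι) :
    av (fun i => F (i + c)) = av F := av_equiv (Equiv.addRight c) F

/-- averaging over the image of something onto which translations act -/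
lemma av_surj {ι V : Type*} [Fintype ι] [Fintype V] [AddCommGroup ι] [AddCommGroup V] (φ : ι →+ V)
    (F : V → ℝ) (h : ∀ y, ∃ e, ∀ x, F (x + y) = F (x + φ e)) : av (fun e => F (φ e)) = av F := by
  have h1 : ∀ y, av (fun e => F (φ e + y)) = av (fun e => F (φ e)) := by
    intro y
    obtain ⟨c, hc⟩ := h y
    simp_rw [hc]
    rw [← av_shift (fun e => F (φ e)) c]
    simp
  calc av (fun e => F (φ e)) = av (fun y : V => av (fun e => F (φ e + y))) := by
        simp_rw [h1]; rw [av_const]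
    _ = av (fun e => av (fun y : V => F (φ e + y))) := av_comm _
    _ = av (fun e : ι => av F) := by
        congr 1; ext e
        simp_rw [add_comm (φ e)]; exact av_shift F (φ e)
    _ = av F := av_const _

/-- Generic word lemma. -/
def gop {n k : ℕ} (A : Finset (Fin n × Fin n)) (ε : Fin n × Fin n → ZMod 2) (z : TState n k) : TState n k :=
  fun i => z i + ∑ p ∈ A, if p.2 = i then ε p • z p.1 else 0

lemma zmod2_cases (x : ZMod 2) : x = 0 ∨ x = 1 := by
  revert x; decide

lemma gop_step {n k : ℕ} {A : Finset (Fin n × Fin n)} {S T : Finset (Fin n)} (hST : Disjoint S T)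
    (hA : A ⊆ S ×ˢ T) {b : Fin n × Fin n} (hbA : b ∉ A) (hb : b ∈ S ×ˢ T) (ε) (z : TState n k) :
    gop (insert b A) ε z = gop A ε (if ε b = 0 then z else sg b.1 b.2 z) := by
  ext i : 1
  unfold gop
  rw [Finset.sum_insert hbA]
  rcases zmod2_cases (ε b) with h | h
  · simp [h]
  · have h1 : ∀ p ∈ insert b A, sg b.1 b.2 z p.1 = z p.1 := by
      intro p hp
      unfold sg
      rw [Function.update_of_ne]
      have hp' : p ∈ S ×ˢ T := by
        rcases Finset.mem_insert.1 hp with rfl | hp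
        · exact hb
        · exact hA hp
      rw [Finset.mem_product] at hp' hb
      intro e
      exact Finset.disjoint_left.1 hST (e ▸ hp'.1) hb.2
    have h01 : ¬ (ε b = 0) := by rw [h]; decide
    simp only [if_neg h01]
    rw [Finset.sum_congr rfl (fun p hp => by rw [h1 p (Finset.mem_insert_of_mem hp)] :
      ∀ p ∈ A, (if p.2 = i then ε p • sg b.1 b.2 z p.1 else 0) = if p.2 = i then ε p • z p.1 else 0)]
    by_cases hi : b.2 = i
    · subst hi; simp [sg, h, add_assoc]
    · rw [if_neg hi]; simp [sg, Function.update_of_ne (Ne.symm hi)]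

lemma gop_indep {n k : ℕ} {A : Finset (Fin n × Fin n)} {b : Fin n × Fin n} (hbA : b ∉ A) (ε) (z : TState n k) :
    gop A (ε + Pi.single b 1) z = gop A ε z := by
  ext i : 1
  unfold gop
  congr 1
  apply Finset.sum_congr rfl
  intro p hp
  have : p ≠ b := by rintro rfl; exact hbA hp
  simp [Pi.single_eq_of_ne this]

lemma gop_zero {n k : ℕ} (A : Finset (Fin n × Fin n)) (z : TState n k) : gop A 0 z = z := by
  ext i : 1
  simp [gop]

lemma DVwords {n k : ℕ} {S T : Finset (Fin n)} (hST : Disjoint S T)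
    (Γ : Finset (TState n k)) (hΓ : ∀ a ∈ S, ∀ b ∈ T, ∀ z, sg a b z ∈ Γ ↔ z ∈ Γ) (μ g : TState n k → ℝ)
    (hμ : ∀ z, 0 ≤ μ z)
    (hg : ∀ z, 0 ≤ g z) (hpos : ∀ z ∈ Γ, μ z ≠ 0 → 0 < g z) :
    ∑ z ∈ Γ, μ z * Real.log (g z) ≤ ∑ p ∈ S ×ˢ T, ent1 (sg p.1 p.2) μ
      + ∑ z ∈ Γ, μ z * Real.log (av (fun ε => g (gop (S ×ˢ T) ε z))) := by
  suffices H : ∀ A : Finset (Fin n × Fin n), A ⊆ S ×ˢ T → 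
      ∑ z ∈ Γ, μ z * Real.log (g z) ≤ ∑ p ∈ A, ent1 (sg p.1 p.2) μ
      + ∑ z ∈ Γ, μ z * Real.log (av (fun ε => g (gop A ε z))) from H _ (Finset.Subset.refl _)
  intro A
  induction A using Finset.induction_on with
  | empty =>
    intro _
    have e : ∀ ε (z : TState n k), gop ∅ ε z = z := by
      intro ε z; ext i : 1; simp [gop]
    simp only [e, av_const]; simp
  | insert b A hbA ih =>
    intro hA
    have hb : b ∈ S ×ˢ T := hA (Finset.mem_insert_self _ _)
    have hA' : A ⊆ S ×ˢ T := (Finset.subset_insert _ _).trans hA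
    have hb' := Finset.mem_product.1 hb
    have hne : b.1 ≠ b.2 := fun e => Finset.disjoint_left.1 hST hb'.1 (e ▸ hb'.2)
    have h1 := ih hA'
    have h2 := DV1 (sg_invol hne) Γ (hΓ _ hb'.1 _ hb'.2) μ (fun z => av (fun ε => g (gop A ε z))) hμ
      (fun z => av_nonneg (fun ε => hg _))
      (fun z hz h => av_pos (fun ε => hg _) 0 (by rw [gop_zero]; exact hpos z hz h))
    have h3 : ∀ z, (av (fun ε => g (gop A ε z)) + av (fun ε => g (gop A ε (sg b.1 b.2 z)))) / 2
       = av (fun ε => g (gop (insert b A) ε z)) := by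
      intro z
      rw [← av_add]
      have e : ∀ ε, g (gop A ε z) + g (gop A ε (sg b.1 b.2 z)) =
         g (gop (insert b A) ε z) + g (gop (insert b A) (ε + Pi.single b 1) z) := by
        intro ε
        rw [gop_step hST hA' hbA hb, gop_step hST hA' hbA hb, gop_indep hbA]
        rcases zmod2_cases (ε b) with h | h
        · simp [h]
        · have : (1 + 1 : ZMod 2) = 0 := by decide
          simp [h, this]; ring
      simp_rw [e]
      rw [av_add, av_shift (fun ε => g (gop (insert b A) ε z))]
      ring
    simp only [h3] at h2
    rw [Finset.sum_insert hbA]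
    linarith

/-- unnormalised marginals -/
def FS {n k : ℕ} (μ : TState n k → ℝ) (S : Finset (Fin n)) (z : TState n k) : ℝ :=
  ∑ y, μ (S.piecewise z y)

lemma swap_sum {n k : ℕ} (S : Finset (Fin n)) (G : TState n k → TState n k → ℝ) :
    ∑ z, ∑ y, G z y = ∑ z, ∑ y, G (S.piecewise z y) (S.piecewise y z) := by
  rw [← Fintype.sum_prod_type', ← Fintype.sum_prod_type']
  have inv : Function.Involutive (fun p : TState n k × TState n k => (S.piecewise p.1 p.2, S.piecewise p.2 p.1)) := by
    intro p
    ext i : 2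
    · by_cases h : i ∈ S <;> simp [h]
    · by_cases h : i ∈ S <;> simp [h]
  exact (sum_invol inv (fun p => G p.1 p.2)).symm

lemma marginal {n k : ℕ} (μ h : TState n k → ℝ) (S : Finset (Fin n))
    (hh : ∀ z y, h (S.piecewise z y) = h z) :
    ∑ z, FS μ S z * h z = (Fintype.card (TState n k) : ℝ) * ∑ z, μ z * h z := by
  unfold FS
  simp_rw [Finset.sum_mul]
  have e : ∀ z y : TState n k, μ (S.piecewise z y) * h z = μ (S.piecewise z y) * h (S.piecewise z y) := by
    intro z y; rw [hh]
  simp_rw [e]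
  rw [← swap_sum S (fun z _ => μ z * h z)]
  simp only [Finset.sum_const, nsmul_eq_mul, Finset.card_univ, ← Finset.mul_sum]

lemma FS_nonneg {n k : ℕ} {μ : TState n k → ℝ} (hμ : ∀ z, 0 ≤ μ z) (S) (z) : 0 ≤ FS μ S z :=
  Finset.sum_nonneg (fun _ _ => hμ _)

lemma FS_pos {n k : ℕ} {μ : TState n k → ℝ} (hμ : ∀ z, 0 ≤ μ z) (S) (z) (h : μ z ≠ 0) : 0 < FS μ S z := by
  refine Finset.sum_pos' (fun _ _ => hμ _) ⟨z, mem_univ _, ?_⟩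
  have e : S.piecewise z z = z := by
    ext i : 1
    by_cases hi : i ∈ S <;> simp [hi]
  rw [e]; exact lt_of_le_of_ne (hμ z) (Ne.symm h)

lemma FS_dep {n k : ℕ} (μ : TState n k → ℝ) (S) (z w : TState n k) (h : ∀ i ∈ S, z i = w i) : FS μ S z = FS μ S w := by
  unfold FS
  congr 1; ext y; congr 1; ext i : 1
  by_cases hi : i ∈ S <;> simp [hi, h i]

lemma FS_univ {n k : ℕ} (μ : TState n k → ℝ) (z) : FS μ univ z = (Fintype.card (TState n k) : ℝ) * μ z := by
  unfold FS; simp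

lemma FS_empty {n k : ℕ} (μ : TState n k → ℝ) (z) : FS μ ∅ z = ∑ z, μ z := by
  unfold FS; simp

/-- averaging out a set of rows : words from a spanning set -/
lemma FS_av {n k : ℕ} (μ : TState n k → ℝ) (S) (z) :
    FS μ S z = (Fintype.card (TState n k) : ℝ) * av (fun y => μ (S.piecewise z y)) := by
  unfold FS av
  field_simp


lemma ptwise {η R : ℝ} (h0 : 0 < η) (h1 : η ≤ 1/2) (hR : 0 < R) (hR2 : η * R ≤ 1 - η) :
    Real.log (1 - η + η * R) ≤ 3/4 * Real.log R + (3/4 - η) * (1/R - 1) := by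
  set F : ℝ → ℝ := fun R => 3/4 * Real.log R + (3/4 - η) * (R⁻¹ - 1) - Real.log (1 - η + η * R) with hF
  set F' : ℝ → ℝ := fun R => 3/4 * R⁻¹ + (3/4 - η) * (-(R^2)⁻¹) - η / (1 - η + η * R) with hF'
  have hd : ∀ x, 0 < x → HasDerivAt F (F' x) x := by
    intro x hx
    have hs : 0 < 1 - η + η * x := by nlinarith
    have d1 := (Real.hasDerivAt_log hx.ne').const_mul (3/4)
    have d2 := ((hasDerivAt_inv hx.ne').sub_const 1).const_mul (3/4 - η)
    have d3 : HasDerivAt (fun R => 1 - η + η * R) η x := by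
      simpa using ((hasDerivAt_id x).const_mul η).const_add (1 - η)
    have d4 := d3.log hs.ne'
    exact (d1.add d2).sub d4
  have key : ∀ x, 0 < x → F' x = (x - 1) * (-(1/4) * η * x + (3/4 - 7/4 * η + η^2)) / (x^2 * (1 - η + η * x)) := by
    intro x hx
    have hs : 0 < 1 - η + η * x := by nlinarith
    simp only [hF']
    obtain ⟨s, hs1⟩ : ∃ s, s = 1 - η + η * x := ⟨_, rfl⟩
    rw [← hs1] at hs ⊢
    field_simp
    rw [hs1]
    ring
  have hF1 : F 1 = 0 := by simp [hF]
  suffices 0 ≤ F R by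
    simp only [hF] at this; rw [one_div]; linarith
  rcases le_total R 1 with hR1 | hR1
  · have anti : AntitoneOn F (Set.Icc R 1) := by
      apply antitoneOn_of_deriv_nonpos (convex_Icc _ _)
      · intro x hx; exact (hd x (lt_of_lt_of_le hR hx.1)).continuousAt.continuousWithinAt
      · intro x hx; rw [interior_Icc] at hx
        exact (hd x (hR.trans hx.1)).differentiableAt.differentiableWithinAt
      · intro x hx; rw [interior_Icc] at hx
        have hx0 : 0 < x := hR.trans hx.1
        rw [(hd x hx0).deriv, key x hx0]
        have hs : 0 < 1 - η + η * x := by nlinarith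
        apply div_nonpos_of_nonpos_of_nonneg _ (by positivity)
        apply mul_nonpos_of_nonpos_of_nonneg (by linarith [hx.2])
        have := hx.2
        nlinarith
    have := anti (Set.left_mem_Icc.2 hR1) (Set.right_mem_Icc.2 hR1) hR1
    linarith
  · have mono : MonotoneOn F (Set.Icc 1 R) := by
      apply monotoneOn_of_deriv_nonneg (convex_Icc _ _)
      · intro x hx; exact (hd x (lt_of_lt_of_le one_pos hx.1)).continuousAt.continuousWithinAt
      · intro x hx; rw [interior_Icc] at hx
        exact (hd x (one_pos.trans hx.1)).differentiableAt.differentiableWithinAt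
      · intro x hx; rw [interior_Icc] at hx
        have hx0 : 0 < x := one_pos.trans hx.1
        rw [(hd x hx0).deriv, key x hx0]
        have hs : 0 < 1 - η + η * x := by nlinarith
        apply div_nonneg _ (by positivity)
        apply mul_nonneg (by linarith [hx.1])
        have := hx.2
        nlinarith
    have := mono (Set.left_mem_Icc.2 hR1) (Set.right_mem_Icc.2 hR1) hR1
    linarith

lemma av_prod_pi {ι κ : Type*} [Fintype ι] [DecidableEq ι] [Fintype κ] (f : ι → κ → ℝ) :
    av (fun ε : ι → κ => ∏ i, f i (ε i)) = ∏ i, av (f i) := by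
  unfold av
  rw [Finset.prod_div_distrib, Finset.prod_const, Finset.prod_univ_sum, Fintype.piFinset_univ,
    Fintype.card_fun, Finset.card_univ]
  push_cast; rfl

lemma av_zmod2 (F : ZMod 2 → ℝ) : av F = (F 0 + F 1) / 2 := by
  unfold av
  have : (∑ i, F i) = F 0 + F 1 := Fin.sum_univ_two F
  rw [this, ZMod.card]; norm_num

lemma av_allzero {ι : Type*} [Fintype ι] [DecidableEq ι] (A : Finset ι) :
    av (fun ε : ι → ZMod 2 => if ∀ p ∈ A, ε p = 0 then (1:ℝ) else 0) = (1/2)^A.card := by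
  have e : ∀ ε : ι → ZMod 2, (if ∀ p ∈ A, ε p = 0 then (1:ℝ) else 0)
      = ∏ i, (fun i x => if i ∈ A then (if x = 0 then (1:ℝ) else 0) else 1) i (ε i) := by
    intro ε
    split_ifs with h
    · symm; apply Finset.prod_eq_one; intro i _
      by_cases hi : i ∈ A <;> simp [hi, h]
    · push Not at h
      obtain ⟨p, hp, hp2⟩ := h
      symm; apply Finset.prod_eq_zero (mem_univ p); simp [hp, hp2]
  rw [funext e, av_prod_pi (fun i x => if i ∈ A then (if x = 0 then (1:ℝ) else 0) else 1)]
  have e2 : ∀ i, av ((fun i (x : ZMod 2) => if i ∈ A then (if x = 0 then (1:ℝ) else 0) else 1) i) = if i ∈ A then 1/2 else 1 := by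
    intro i; rw [av_zmod2]; by_cases hi : i ∈ A <;> simp [hi]
  simp_rw [e2]
  rw [Finset.prod_ite_mem]; simp

lemma av_prodtype {ι κ : Type*} [Fintype ι] [Fintype κ] (F : ι × κ → ℝ) :
    av F = av (fun i => av (fun j => F (i, j))) := by
  unfold av
  rw [Fintype.sum_prod_type, ← Finset.sum_div, Fintype.card_prod]; push_cast
  rw [div_div]; ring

/-- linear combination of the rows in `S` -/
def lc {n k : ℕ} (z : TState n k) (S : Finset (Fin n)) (c : Fin n → ZMod 2) : Fin k → ZMod 2 :=
  ∑ b ∈ S, c b • z b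

lemma lc_add {n k : ℕ} (z : TState n k) (S) (c d : Fin n → ZMod 2) : lc z S (c + d) = lc z S c + lc z S d := by
  simp [lc, add_smul, Finset.sum_add_distrib]

lemma gop_row {n k : ℕ} (S : Finset (Fin n)) (j : Fin n) (ε) (z : TState n k) :
    gop (S ×ˢ {j}) ε z = Function.update z j (z j + lc z S (fun b => ε (b, j))) := by
  ext i : 1
  unfold gop lc
  rw [Finset.sum_product]
  by_cases h : i = j
  · subst h; simp
  · simp [Function.update_of_ne h]
    intro h'; exact absurd h' h

lemma gop_col {n k : ℕ} (T : Finset (Fin n)) (j : Fin n) (ε) (z : TState n k) :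
    gop ({j} ×ˢ T) ε z = fun i => if i ∈ T then z i + ε (j, i) • z j else z i := by
  ext i : 1
  unfold gop
  rw [Finset.sum_product]
  simp only [Finset.sum_singleton]
  by_cases h : i ∈ T
  · simp [h, Finset.sum_ite_eq']
  · simp [h]

lemma exists_lc {n k : ℕ} {z : TState n k} (hz : Submodule.span (ZMod 2) (Set.range z) = ⊤) (v : Fin k → ZMod 2) :
    ∃ c, lc z univ c = v := by
  have : v ∈ Submodule.span (ZMod 2) (Set.range z) := by rw [hz]; trivial
  obtain ⟨c, hc⟩ := (Submodule.mem_span_range_iff_exists_fun (ZMod 2)).1 this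
  exact ⟨c, hc⟩

section stage
variable {n k : ℕ} (z : TState n k) (hz : Submodule.span (ZMod 2) (Set.range z) = ⊤) (j : Fin n)
  (b : (Fin k → ZMod 2) → ℝ) (hb : ∀ v, 0 ≤ b v)
  (hinv : ∀ v c, b (v + lc z (univ.filter (· < j)) c) = b v)

lemma stage_av (hz : Submodule.span (ZMod 2) (Set.range z) = ⊤) :
    av b = av (fun ε : Fin n × Fin n → ZMod 2 =>
      (b (z j + lc z (univ.erase j) (fun i => ε (i, j))) + b (lc z (univ.erase j) (fun i => ε (i, j)))) / 2) := by
  let φ : (Fin n × Fin n → ZMod 2) × ZMod 2 →+ (Fin k → ZMod 2) :=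
    { toFun := fun p => lc z (univ.erase j) (fun i => p.1 (i, j)) + p.2 • z j
      map_zero' := by simp [lc]
      map_add' := by
        intro p q
        have : (fun i => (p+q).1 (i,j)) = (fun i => p.1 (i,j)) + (fun i => q.1 (i,j)) := by ext i; simp
        rw [this, lc_add, Prod.snd_add, add_smul]; abel }
  have h := av_surj φ b (by
    intro y
    obtain ⟨c, hc⟩ := exists_lc hz y
    refine ⟨(fun p => c p.1, c j), fun x => ?_⟩
    congr 2
    show y = lc z (univ.erase j) c + c j • z j
    rw [← hc]; unfold lc
    rw [add_comm, Finset.add_sum_erase _ (fun b => c b • z b) (mem_univ j)])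
  rw [← h, av_prodtype]
  congr 1; ext ε
  rw [av_zmod2]
  show (b (lc z (univ.erase j) (fun i => ε (i, j)) + (0 : ZMod 2) • z j) + b (lc z (univ.erase j) (fun i => ε (i, j)) + (1:ZMod 2) • z j))/2 = _
  rw [zero_smul, one_smul, add_zero, add_comm (lc _ _ _) (z j)]; ring

lemma lc_lt (ε : Fin n → ZMod 2) (h : ∀ a ∈ univ.filter (fun a => j < a), ε a = 0) :
    lc z (univ.erase j) ε = lc z (univ.filter (· < j)) ε := by
  unfold lc
  symm
  apply Finset.sum_subset
  · intro i hi; simp at hi ⊢; exact hi.ne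
  · intro i hi hi2
    simp at hi hi2
    rw [h i (by simp; exact lt_of_le_of_ne hi2 (Ne.symm hi)), zero_smul]

def etaj {n : ℕ} (j : Fin n) : ℝ := (1/2)^(n - j.val)

lemma av_gt : av (fun ε : Fin n × Fin n → ZMod 2 =>
      if ∀ a ∈ univ.filter (fun a => j < a), ε (a, j) = 0 then (1:ℝ) else 0) = 2 * etaj j := by
  have := av_allzero ((univ.filter (fun a => j < a)) ×ˢ ({j} : Finset (Fin n)))
  have hc : #(univ.filter (fun a => j < a)) = n - 1 - j := by
    rw [← Fin.card_Ioi]; congr 1; ext a; simp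
  rw [Finset.card_product, Finset.card_singleton, hc] at this
  have e : n - j.val = n - 1 - j + 1 := by omega
  rw [etaj, e, pow_succ]
  trans (1 / 2) ^ ((n - 1 - j.val) * 1)
  · rw [← this]; congr 1; ext ε
    congr 1
    simp
  · rw [mul_one]; ring

include hz hb hinv in
lemma stage_low : etaj j * b (z j) ≤ av b := by
  have h2 : etaj j * b (z j) = 2 * etaj j * (b (z j) / 2) := by ring
  rw [stage_av z j b hz, h2, ← av_gt j, ← av_mul]
  apply av_mono
  intro ε
  split_ifs with h
  · rw [lc_lt z j _ h, hinv]
    have := hb (lc z (univ.filter (· < j)) (fun i => ε (i, j)))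
    linarith
  · have := hb (lc z (univ.erase j) (fun i => ε (i, j)))
    have := hb (z j + lc z (univ.erase j) (fun i => ε (i, j)))
    linarith

include hz hb hinv in
lemma stage_up : av (fun δ : Fin n × Fin n → ZMod 2 => av (fun ε : Fin n × Fin n → ZMod 2 =>
      b (z j + lc z (univ.erase j) (fun i => ε (i, j)) + (∑ a ∈ univ.filter (fun a => j < a), ε (a, j) * δ (j, a)) • z j)))
      ≤ av b + etaj j * b (z j) := by
  rw [av_comm]
  have h2 : etaj j * b (z j) = 2 * etaj j * (b (z j) / 2) := by ring
  rw [stage_av z j b hz, h2, ← av_gt j, ← av_mul, ← av_add]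
  apply av_mono
  intro ε
  split_ifs with h
  · have e : ∀ δ : Fin n × Fin n → ZMod 2, ∑ a ∈ univ.filter (fun a => j < a), ε (a, j) * δ (j, a) = 0 := by
      intro δ; apply Finset.sum_eq_zero; intro a ha; rw [h a ha, zero_mul]
    simp only [e, zero_smul, add_zero]
    rw [av_const]
    rw [lc_lt z j _ h, hinv]
    have := hb (lc z (univ.filter (· < j)) (fun i => ε (i, j)))
    linarith
  · push Not at h
    obtain ⟨a, ha, ha0⟩ := h
    have ha1 : ε (a, j) = 1 := (zmod2_cases _).resolve_left ha0
    let φ : (Fin n × Fin n → ZMod 2) →+ ZMod 2 :=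
      { toFun := fun δ => ∑ a ∈ univ.filter (fun a => j < a), ε (a, j) * δ (j, a)
        map_zero' := by simp
        map_add' := by intro p q; simp [mul_add, Finset.sum_add_distrib] }
    have h := av_surj φ (fun s => b (z j + lc z (univ.erase j) (fun i => ε (i, j)) + s • z j)) (by
      intro y
      refine ⟨Pi.single (j, a) y, fun x => ?_⟩
      congr 4
      show y = ∑ a' ∈ univ.filter (fun a => j < a), ε (a', j) * (Pi.single (j, a) y : Fin n × Fin n → ZMod 2) (j, a')
      rw [Finset.sum_eq_single a]
      · simp [ha1]
      · intro a' _ hne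
        rw [Pi.single_eq_of_ne]; simp
        intro h; exact hne (Prod.ext_iff.1 h).2
      · intro h; exact absurd ha h)
    refine (le_of_eq h).trans ?_
    rw [av_zmod2, zero_smul, one_smul, add_zero]
    have e : z j + lc z (univ.erase j) (fun i => ε (i, j)) + z j = lc z (univ.erase j) (fun i => ε (i, j)) := by
      rw [add_comm (z j), add_assoc, zmod2_add_self, add_zero]
    rw [e]; linarith

end stage


lemma span_sg_le {n k : ℕ} (a b : Fin n) (z : TState n k) :
    Submodule.span (ZMod 2) (Set.range (sg a b z)) ≤ Submodule.span (ZMod 2) (Set.range z) := by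
  rw [Submodule.span_le]
  rintro _ ⟨i, rfl⟩
  have h : ∀ i, z i ∈ Submodule.span (ZMod 2) (Set.range z) := fun i => Submodule.subset_span ⟨i, rfl⟩
  by_cases hi : i = b
  · subst hi; simp only [sg, Function.update_self]; exact Submodule.add_mem _ (h _) (h _)
  · simp only [sg, Function.update_of_ne hi]; exact h _

lemma stief_sg {n k : ℕ} {a b : Fin n} (h : a ≠ b) (z : TState n k) : sg a b z ∈ Stief n k ↔ z ∈ Stief n k := by
  have e : Submodule.span (ZMod 2) (Set.range (sg a b z)) = Submodule.span (ZMod 2) (Set.range z) := by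
    apply le_antisymm (span_sg_le a b z)
    have := span_sg_le a b (sg a b z)
    rwa [sg_invol h z] at this
  unfold Stief
  simp only [Set.mem_ofPred_eq, e]

lemma stief_li {n : ℕ} {z : TState n n} : z ∈ Stief n n ↔ LinearIndependent (ZMod 2) z := by
  constructor
  · intro h; exact linearIndependent_of_top_le_span_of_card_eq_finrank (le_of_eq (Eq.symm h)) (by simp)
  · intro h; exact h.span_eq_top_of_card_eq_finrank' (by simp)

lemma av_row {n k : ℕ} (f : TState n k → ℝ) (j : Fin n) :
    av (fun y : TState n k => av (fun v => f (Function.update y j v))) = av f := by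
  have h1 : ∀ y : TState n k, av (fun v => f (Function.update y j v)) = av (fun v => f (y + (Pi.single j v : TState n k))) := by
    intro y
    rw [← av_shift (fun v => f (Function.update y j v)) (y j)]
    congr 1; ext v; congr 1; ext i : 1
    by_cases hi : i = j
    · subst hi; simp [add_comm]
    · simp [hi]
  simp_rw [h1]
  rw [av_comm]
  simp_rw [av_shift]
  rw [av_const]

lemma FS_av_row {n k : ℕ} (μ : TState n k → ℝ) (S : Finset (Fin n)) (j : Fin n) (hj : j ∉ S) (z : TState n k) :
    av (fun v => FS μ (insert j S) (Function.update z j v)) = FS μ S z := by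
  have e : ∀ v y, (insert j S).piecewise (Function.update z j v) y = S.piecewise z (Function.update y j v) := by
    intro v y; ext i : 1
    by_cases hi : i = j
    · subst hi; simp [hj]
    · by_cases hS : i ∈ S <;> simp [hi, hS]
  simp only [FS_av, e]
  simp_rw [mul_comm (Fintype.card (TState n k) : ℝ)]
  rw [av_mul, av_comm, av_row (fun y => μ (S.piecewise z y))]

section bfun
variable {n k : ℕ} (μ : TState n k → ℝ) (j : Fin n)

def Sj {n : ℕ} (j : Fin n) : Finset (Fin n) := univ.filter (· < j)

lemma mem_Sj {n : ℕ} {i j : Fin n} : i ∈ Sj j ↔ i < j := by simp [Sj]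

lemma j_notin_Sj {n : ℕ} (j : Fin n) : j ∉ Sj j := by simp [Sj]

def bfun (z : TState n k) (v : Fin k → ZMod 2) : ℝ :=
  av (fun ε : Fin n × Fin n → ZMod 2 => FS μ (insert j (Sj j)) (Function.update z j (v + lc z (Sj j) (fun b => ε (b, j)))))

lemma bfun_nonneg (hμ : ∀ z, 0 ≤ μ z) (z v) : 0 ≤ bfun μ j z v := av_nonneg (fun _ => FS_nonneg hμ _ _)

lemma lc_dep {n k : ℕ} {S : Finset (Fin n)} {z w : TState n k} (h : ∀ i ∈ S, z i = w i) (c) : lc z S c = lc w S c := by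
  unfold lc; apply Finset.sum_congr rfl; intro i hi; rw [h i hi]

lemma bfun_dep {z w : TState n k} (h : ∀ i ∈ Sj j, z i = w i) : bfun μ j z = bfun μ j w := by
  ext v
  unfold bfun
  congr 1; ext ε
  rw [lc_dep h]
  apply FS_dep
  intro i hi
  by_cases hij : i = j
  · subst hij; simp
  · simp only [Function.update_of_ne hij]; exact h i ((Finset.mem_insert.1 hi).resolve_left hij)

lemma bfun_inv (z : TState n k) (v c) : bfun μ j z (v + lc z (Sj j) c) = bfun μ j z v := by
  unfold bfun
  rw [← av_shift _ (fun p => c p.1)]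
  congr 1; ext ε
  congr 2
  have : (fun b => (ε + (fun p : Fin n × Fin n => c p.1)) (b, j)) = (fun b => ε (b, j)) + c := by ext b; simp
  rw [this, lc_add, add_assoc, add_comm (lc z (Sj j) c), add_assoc, ← lc_add _ _ c c]
  have : c + c = 0 := by ext i; exact CharTwo.add_self_eq_zero (c i)
  rw [this]; simp [lc]

lemma bfun_av (z : TState n k) : av (bfun μ j z) = FS μ (Sj j) z := by
  rw [← FS_av_row μ (Sj j) j (j_notin_Sj j) z]
  unfold bfun
  rw [av_comm]
  simp_rw [av_shift (fun v => FS μ (insert j (Sj j)) (Function.update z j v))]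
  rw [av_const]

lemma lc_mem (z : TState n k) (S : Finset (Fin n)) (c) : lc z S c ∈ Submodule.span (ZMod 2) (z '' (S : Set (Fin n))) := by
  unfold lc
  apply Submodule.sum_mem
  intro i hi
  apply Submodule.smul_mem
  exact Submodule.subset_span ⟨i, hi, rfl⟩

lemma exists_of_FS_ne {S : Finset (Fin n)} {z : TState n k} (h : FS μ S z ≠ 0) : ∃ w, μ w ≠ 0 ∧ ∀ i ∈ S, w i = z i := by
  unfold FS at h
  obtain ⟨y, _, hy⟩ := Finset.exists_ne_zero_of_sum_ne_zero h
  refine ⟨_, hy, fun i hi => by simp [hi]⟩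

lemma image_congr' {S : Finset (Fin n)} {w z : TState n k} (h : ∀ i ∈ S, w i = z i) :
    w '' (S : Set (Fin n)) = z '' (S : Set (Fin n)) := Set.image_congr (fun i hi => h i hi)

lemma bfun_supp (hs : ∀ z, μ z ≠ 0 → LinearIndependent (ZMod 2) z) (z : TState n k) (v)
    (h : bfun μ j z v ≠ 0) : v ∉ Submodule.span (ZMod 2) (z '' (Sj j : Set (Fin n))) := by
  unfold bfun av at h
  have h' : ∑ ε : Fin n × Fin n → ZMod 2, FS μ (insert j (Sj j)) (Function.update z j (v + lc z (Sj j) (fun b => ε (b, j)))) ≠ 0 := by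
    intro h0; rw [h0] at h; simp at h
  obtain ⟨ε, _, hε⟩ := Finset.exists_ne_zero_of_sum_ne_zero h'
  obtain ⟨w, hw, hwz⟩ := exists_of_FS_ne μ hε
  have hli := hs w hw
  have h1 : ∀ i ∈ Sj j, w i = z i := by
    intro i hi
    rw [hwz i (Finset.mem_insert_of_mem hi), Function.update_of_ne]
    rintro rfl; exact j_notin_Sj _ hi
  have h2 : w j = v + lc z (Sj j) (fun b => ε (b, j)) := by
    rw [hwz j (Finset.mem_insert_self _ _), Function.update_self]
  have h3 := hli.notMem_span_image (s := (Sj j : Set (Fin n))) (x := j) (by simpa using j_notin_Sj j)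
  rw [image_congr' h1, h2] at h3
  intro hv
  exact h3 (Submodule.add_mem _ hv (lc_mem _ _ _))

open Classical in
lemma span_av (hs : ∀ z, μ z ≠ 0 → LinearIndependent (ZMod 2) z) (hkn : k = n) (z : TState n k)
    (h : FS μ (Sj j) z ≠ 0) : av (fun v => if v ∉ Submodule.span (ZMod 2) (z '' (Sj j : Set (Fin n))) then (1:ℝ) else 0)
      = 1 - etaj j := by
  obtain ⟨w, hw, hwz⟩ := exists_of_FS_ne μ h
  have hli := hs w hw
  set U := Submodule.span (ZMod 2) (z '' (Sj j : Set (Fin n))) with hU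
  have hfr : Module.finrank (ZMod 2) U = j.val := by
    have h1 : LinearIndependent (ZMod 2) (fun i : (Sj j) => w i) := hli.comp _ Subtype.val_injective
    have h2 := finrank_span_eq_card h1
    have e : Set.range (fun i : (Sj j) => w i) = z '' (Sj j : Set (Fin n)) := by
      rw [← image_congr' hwz]; ext x; simp
    rw [e] at h2
    rw [hU, h2, Fintype.card_coe]
    have : Sj j = Finset.Iio j := by ext i; simp [Sj]
    rw [this, Fin.card_Iio]
  have hcard : Fintype.card U = 2 ^ j.val := by
    rw [Module.card_eq_pow_finrank (K := ZMod 2) (V := U), hfr, ZMod.card]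
  have e : ∀ v, (if v ∉ U then (1:ℝ) else 0) = 1 + (if v ∈ U then (-1) else 0) := by
    intro v; by_cases hv : v ∈ U <;> simp [hv]
  simp_rw [e]
  rw [av_add, av_const]
  unfold av
  rw [← Finset.sum_filter, Finset.sum_const, nsmul_eq_mul]
  have : #(univ.filter (· ∈ U)) = Fintype.card U := by
    rw [Fintype.card_subtype]
  rw [this, hcard, Fintype.card_fun, ZMod.card, Fintype.card_fin, hkn]
  unfold etaj
  have hj : j.val + (n - j.val) = n := by omega
  have hp : (2:ℝ)^n = 2^j.val * 2^(n - j.val) := by rw [← pow_add, hj]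
  push_cast
  rw [hp, one_div, inv_pow]
  field_simp
  ring
end bfun


lemma marginal_av {n k : ℕ} (μ h : TState n k → ℝ) (S : Finset (Fin n))
    (hh : ∀ z y, h (S.piecewise z y) = h z) :
    av (fun z => FS μ S z * h z) = ∑ z, μ z * h z := by
  unfold av
  rw [marginal μ h S hh]; field_simp

section st
variable {n k : ℕ} (μ : TState n k → ℝ) (j : Fin n)

lemma ratio_bound (hμ : ∀ z, 0 ≤ μ z) (hsum : ∑ z, μ z = 1)
    (hs : ∀ z, μ z ≠ 0 → LinearIndependent (ZMod 2) z) (hkn : k = n) :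
    ∑ z, μ z * (FS μ (Sj j) z / bfun μ j z (z j)) ≤ 1 - etaj j := by
  classical
  set q : TState n k → ℝ := fun z => FS μ (Sj j) z / bfun μ j z (z j) with hq
  have hqdep : ∀ z w : TState n k, (∀ i ∈ insert j (Sj j), z i = w i) → q z = q w := by
    intro z w h
    have h' : ∀ i ∈ Sj j, z i = w i := fun i hi => h i (Finset.mem_insert_of_mem hi)
    simp only [hq]
    rw [FS_dep μ _ z w h', bfun_dep μ j h', h j (Finset.mem_insert_self _ _)]
  show ∑ z, μ z * q z ≤ _
  rw [← marginal_av μ q (insert j (Sj j)) (fun z y => hqdep _ _ (fun i hi => Finset.piecewise_eq_of_mem _ _ _ hi))]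
  have e1 : ∀ ε : Fin n × Fin n → ZMod 2, av (fun z => FS μ (insert j (Sj j)) z * q z) =
      av (fun z => FS μ (insert j (Sj j)) (Function.update z j (z j + lc z (Sj j) (fun b => ε (b, j)))) * q z) := by
    intro ε
    have key : ∀ (z : TState n k) x, ∀ i ∈ Sj j, Function.update z j x i = z i := by
      intro z x i hi; rw [Function.update_of_ne]; rintro rfl; exact j_notin_Sj _ hi
    have inv : Function.Involutive (fun z : TState n k => Function.update z j (z j + lc z (Sj j) (fun b => ε (b, j)))) := by
      intro z
      simp only [Function.update_self, Function.update_idem]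
      rw [lc_dep (key z _), add_assoc, zmod2_add_self, add_zero, Function.update_eq_self]
    rw [← av_equiv inv.toPerm]
    congr 1; ext z
    simp only [Function.Involutive.coe_toPerm]
    congr 1
    simp only [hq]
    rw [FS_dep μ _ _ z (key z _), bfun_dep μ j (key z _), Function.update_self, bfun_inv]
  have e2 : av (fun z => FS μ (insert j (Sj j)) z * q z) = av (fun z => bfun μ j z (z j) * q z) := by
    have := av_const (ι := Fin n × Fin n → ZMod 2) (av (fun z => FS μ (insert j (Sj j)) z * q z))
    rw [← this]
    conv_lhs => rw [funext e1]
    rw [av_comm]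
    congr 1; ext z
    rw [av_mul]; rfl
  rw [e2]
  have e3 : ∀ z, bfun μ j z (z j) * q z ≤
     (if z j ∉ Submodule.span (ZMod 2) (z '' (Sj j : Set (Fin n))) then (1:ℝ) else 0) * FS μ (Sj j) z := by
    intro z
    have hF := FS_nonneg hμ (Sj j) z
    by_cases h : bfun μ j z (z j) = 0
    · rw [h, zero_mul]; split_ifs <;> simp [hF]
    · rw [if_pos (bfun_supp μ j hs z _ h)]; simp only [hq]
      apply le_of_eq; field_simp
  refine (av_mono e3).trans (le_of_eq ?_)
  rw [← av_row _ j]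
  have e4 : ∀ z : TState n k, av (fun v => (if Function.update z j v j ∉ Submodule.span (ZMod 2) (Function.update z j v '' (Sj j : Set (Fin n))) then (1:ℝ) else 0) * FS μ (Sj j) (Function.update z j v)) = FS μ (Sj j) z * (1 - etaj j) := by
    intro z
    have key : ∀ x, ∀ i ∈ Sj j, Function.update z j x i = z i := by
      intro x i hi; rw [Function.update_of_ne]; rintro rfl; exact j_notin_Sj _ hi
    have : ∀ v, FS μ (Sj j) (Function.update z j v) = FS μ (Sj j) z := fun v => FS_dep μ _ _ z (key v)
    simp only [this, Function.update_self, image_congr' (key _)]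
    rw [av_mul]
    by_cases h : FS μ (Sj j) z = 0
    · rw [h]; simp
    · rw [span_av μ j hs hkn z h]; ring
  simp_rw [e4]
  rw [marginal_av μ (fun _ => 1 - etaj j) (Sj j) (fun _ _ => rfl), ← Finset.sum_mul, hsum, one_mul]

lemma etaj_pos : 0 < etaj j := by unfold etaj; positivity
lemma etaj_le : etaj j ≤ 1/2 := by
  unfold etaj
  have : n - j.val = (n - j.val - 1) + 1 := by omega
  rw [this, pow_succ]
  have : ((1:ℝ)/2)^(n - j.val - 1) ≤ 1 := pow_le_one₀ (by norm_num) (by norm_num)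
  linarith

def Gt {n : ℕ} (j : Fin n) : Finset (Fin n) := univ.filter (fun a => j < a)

open Classical in
def SF (n k : ℕ) : Finset (TState n k) := univ.filter (· ∈ Stief n k)

lemma mem_SF {n k : ℕ} {z : TState n k} : z ∈ SF n k ↔ z ∈ Stief n k := by simp [SF]

lemma u2_eq (z : TState n k) (hz : z ∈ Stief n k) (hμ : ∀ z, 0 ≤ μ z) :
    av (fun δ => av (fun ε => bfun μ j (gop ((univ.erase j) ×ˢ {j}) ε (gop ({j} ×ˢ Gt j) δ z))
      ((gop ((univ.erase j) ×ˢ {j}) ε (gop ({j} ×ˢ Gt j) δ z)) j))) ≤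
     FS μ (Sj j) z + etaj j * bfun μ j z (z j) := by
  have hup := stage_up z hz j (bfun μ j z) (bfun_nonneg μ j hμ z) (bfun_inv μ j z)
  rw [bfun_av] at hup
  refine le_trans (le_of_eq ?_) hup
  refine congrArg av (funext fun δ => congrArg av (funext fun ε => ?_))
  rw [gop_row]
  set w := gop ({j} ×ˢ Gt j) δ z with hw
  have hwi : ∀ i, w i = if i ∈ Gt j then z i + δ (j, i) • z j else z i := by
    intro i; rw [hw, gop_col]
  have hwj : w j = z j := by rw [hwi, if_neg]; simp [Gt]
  have h1 : ∀ i ∈ Sj j, Function.update w j (w j + lc w (univ.erase j) (fun b => ε (b, j))) i = z i := by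
    intro i hi
    have : i < j := mem_Sj.1 hi
    rw [Function.update_of_ne this.ne, hwi, if_neg]; simp [Gt, this.le]
  rw [bfun_dep μ j h1, Function.update_self, hwj]
  congr 1
  rw [add_assoc]; congr 1
  unfold lc
  have h2 : ∀ b ∈ univ.erase j, ε (b, j) • w b = ε (b, j) • z b + (if b ∈ Gt j then (ε (b, j) * δ (j, b)) • z j else 0) := by
    intro b _
    rw [hwi]; split_ifs
    · rw [smul_add, smul_smul]
    · simp
  rw [Finset.sum_congr rfl h2, Finset.sum_add_distrib, Finset.sum_smul]
  congr 1
  rw [← Finset.sum_filter]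
  apply Finset.sum_congr _ (fun _ _ => rfl)
  ext a; simp [Gt]
  intro h; exact h.ne'

def Eset {n k : ℕ} (μ : TState n k → ℝ) (A : Finset (Fin n × Fin n)) : ℝ := ∑ p ∈ A, ent1 (sg p.1 p.2) μ

lemma stage_main (hμ : ∀ z, 0 ≤ μ z) (hsum : ∑ z, μ z = 1)
    (hsS : ∀ z, μ z ≠ 0 → z ∈ Stief n k)
    (hs : ∀ z, μ z ≠ 0 → LinearIndependent (ZMod 2) z) (hkn : k = n) :
    ∑ z ∈ SF n k, μ z * Real.log (FS μ (insert j (Sj j)) z) ≤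
      Eset μ (Sj j ×ˢ {j}) + 4 * (Eset μ ((univ.erase j) ×ˢ {j}) + Eset μ ({j} ×ˢ Gt j)) +
      ∑ z ∈ SF n k, μ z * Real.log (FS μ (Sj j) z) - Real.log (1 - etaj j) := by
  have hΓ : ∀ (S T : Finset (Fin n)), Disjoint S T → ∀ a ∈ S, ∀ b ∈ T, ∀ z : TState n k, sg a b z ∈ SF n k ↔ z ∈ SF n k := by
    intro S T hST a ha b hb z
    rw [mem_SF, mem_SF]; apply stief_sg; rintro rfl; exact Finset.disjoint_left.1 hST ha hb
  have d0 : Disjoint (Sj j) {j} := by simp [j_notin_Sj]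
  have d1 : Disjoint (univ.erase j) {j} := by simp
  have d2 : Disjoint {j} (Gt j) := by simp [Gt]
  set B : TState n k → ℝ := fun z => bfun μ j z (z j) with hB
  have hBe : ∀ z, B z = av (fun ε => FS μ (insert j (Sj j)) (gop (Sj j ×ˢ {j}) ε z)) := by
    intro z; simp only [hB, bfun, gop_row]
  have hB0 : ∀ z, 0 ≤ B z := fun z => bfun_nonneg μ j hμ z _
  have hBpos : ∀ z, μ z ≠ 0 → 0 < B z := by
    intro z h; rw [hBe]
    refine av_pos (fun _ => FS_nonneg hμ _ _) 0 ?_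
    rw [gop_zero]; exact FS_pos hμ _ _ h
  have s0 := DVwords d0 (SF n k) (hΓ _ _ d0) μ (FS μ (insert j (Sj j))) hμ (FS_nonneg hμ _) (fun z _ h => FS_pos hμ _ _ h)
  simp only [← hBe] at s0
  set u1 : TState n k → ℝ := fun z => av (fun ε => B (gop ((univ.erase j) ×ˢ {j}) ε z)) with hu1
  have s1 := DVwords d1 (SF n k) (hΓ _ _ d1) μ B hμ hB0 (fun z _ h => hBpos z h)
  have hu10 : ∀ z, 0 ≤ u1 z := fun z => av_nonneg (fun _ => hB0 _)
  have hu1pos : ∀ z, μ z ≠ 0 → 0 < u1 z := fun z h => av_pos (fun _ => hB0 _) 0 (by rw [gop_zero]; exact hBpos z h)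
  have s2 := DVwords d2 (SF n k) (hΓ _ _ d2) μ u1 hμ hu10 (fun z _ h => hu1pos z h)
  set η := etaj j with hη
  have hη0 : 0 < η := etaj_pos j
  have hη1 : η ≤ 1/2 := etaj_le j
  have hpt : ∀ z ∈ SF n k, μ z * Real.log (av (fun ε => u1 (gop ({j} ×ˢ Gt j) ε z))) ≤
      1/4 * (μ z * Real.log (FS μ (Sj j) z) - μ z * Real.log (1 - η)) + 3/4 * (μ z * Real.log (B z)) 
       + (3/4 - η) * ((1 - η)⁻¹ * (μ z * (FS μ (Sj j) z / B z)) - μ z) := by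
    intro z hz
    by_cases h : μ z = 0
    · simp [h]
    have hu2 := u2_eq μ j z (mem_SF.1 hz) hμ
    have hu2' : av (fun ε => u1 (gop ({j} ×ˢ Gt j) ε z)) ≤ FS μ (Sj j) z + η * B z := hu2
    have hlow := stage_low z (mem_SF.1 hz) j (bfun μ j z) (bfun_nonneg μ j hμ z) (bfun_inv μ j z)
    rw [bfun_av] at hlow
    have hlow' : η * B z ≤ FS μ (Sj j) z := hlow
    have hA := FS_pos hμ (Sj j) z h
    have hb := hBpos z h
    set A := FS μ (Sj j) z
    have h1η : 0 < 1 - η := by linarith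
    set R := (1 - η) * B z / A with hR
    have hR0 : 0 < R := by positivity
    have hRl : η * R ≤ 1 - η := by
      have : η * R = (1 - η) * (η * B z) / A := by rw [hR]; ring
      rw [this, div_le_iff₀ hA]; nlinarith
    have hp := ptwise hη0 hη1 hR0 hRl
    have hupos : 0 < av (fun ε => u1 (gop ({j} ×ˢ Gt j) ε z)) :=
      av_pos (fun _ => hu10 _) 0 (by rw [gop_zero]; exact hu1pos z h)
    have hl1 := Real.log_le_log hupos hu2'
    have e : A + η * B z = A / (1 - η) * (1 - η + η * R) := by
      rw [hR]; field_simp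
    rw [e, Real.log_mul (by positivity) (by positivity), Real.log_div hA.ne' h1η.ne'] at hl1
    have e2 : Real.log R = Real.log (1 - η) + Real.log (B z) - Real.log A := by
      rw [hR, Real.log_div (by positivity) hA.ne', Real.log_mul h1η.ne' hb.ne']
    have e3 : 1 / R = (1 - η)⁻¹ * (A / B z) := by rw [hR]; field_simp
    rw [e2, e3] at hp
    have := mul_le_mul_of_nonneg_left (hl1.trans (add_le_add_right hp _)) (hμ z)
    refine this.trans (le_of_eq ?_)
    ring
  have hsumpt := Finset.sum_le_sum hpt
  have hsG : ∑ z ∈ SF n k, μ z = 1 := by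
    rw [← hsum]; apply Finset.sum_subset (Finset.subset_univ _); intro z _ hz
    by_contra h; exact hz (mem_SF.2 (hsS z h))
  have hrat := ratio_bound μ j hμ hsum hs hkn
  have hrat2 : ∑ z ∈ SF n k, μ z * (FS μ (Sj j) z / B z) ≤ 1 - η := by
    refine le_trans ?_ hrat
    apply Finset.sum_le_sum_of_subset_of_nonneg (Finset.subset_univ _)
    intro z _ _
    have := hμ z; have := FS_nonneg hμ (Sj j) z; have := bfun_nonneg μ j hμ z (z j)
    positivity
  simp only [Finset.sum_add_distrib, Finset.sum_sub_distrib, ← Finset.mul_sum, ← Finset.sum_mul, hsG] at hsumpt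
  have h1η : 0 < 1 - η := by linarith
  have hr3 : (1 - η)⁻¹ * ∑ z ∈ SF n k, μ z * (FS μ (Sj j) z / B z) ≤ 1 := by
    rw [inv_mul_le_iff₀ h1η]; linarith
  have hr4 : (3/4 - η) * ((1 - η)⁻¹ * ∑ z ∈ SF n k, μ z * (FS μ (Sj j) z / B z) - 1) ≤ 0 :=
    mul_nonpos_of_nonneg_of_nonpos (by linarith) (by linarith)
  unfold Eset
  linarith
end st


lemma sum_Eset_le {n k : ℕ} (μ : TState n k → ℝ) (hμ : ∀ z, 0 ≤ μ z) (A : Fin n → Finset (Fin n × Fin n))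
    (h1 : ∀ j, ∀ p ∈ A j, p.1 ≠ p.2) (h2 : ∀ i j, i ≠ j → Disjoint (A i) (A j)) :
    ∑ j, Eset μ (A j) ≤ EntTot μ := by
  unfold Eset EntTot
  rw [← Finset.sum_biUnion (fun i _ j _ h => h2 i j h)]
  apply Finset.sum_le_sum_of_subset_of_nonneg
  · intro p hp
    obtain ⟨j, _, hj⟩ := Finset.mem_biUnion.1 hp
    simpa using h1 j p hj
  · intro p _ _; exact ent1_nonneg _ _ hμ

def Lm (n m : ℕ) : Finset (Fin n) := univ.filter (fun i => i.val < m)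

lemma card_SF (n : ℕ) : ((SF n n).card : ℝ) = (Fintype.card (TState n n) : ℝ) * ∏ j : Fin n, (1 - etaj j) := by
  have h := card_linearIndependent (K := ZMod 2) (V := Fin n → ZMod 2) (k := n) (by simp)
  have e : Nat.card { s : Fin n → (Fin n → ZMod 2) // LinearIndependent (ZMod 2) s } = (SF n n).card := by
    classical
    rw [Nat.card_eq_fintype_card, Fintype.card_subtype]
    congr 1; ext z; simp [mem_SF, stief_li]
  rw [← e, h]
  rw [Fintype.card_fun, Fintype.card_fun, ZMod.card, Fintype.card_fin, Module.finrank_fin_fun]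
  have e2 : ((((2:ℕ)^n)^n : ℕ) : ℝ) = ∏ j : Fin n, (2:ℝ)^n := by simp
  rw [e2, ← Finset.prod_mul_distrib, Nat.cast_prod]
  apply Finset.prod_congr rfl
  intro j _
  rw [Nat.cast_sub (Nat.pow_le_pow_right (by norm_num) j.2.le)]
  have hj : j.val + (n - j.val) = n := by omega
  have hp : (2:ℝ)^n = 2^j.val * 2^(n - j.val) := by rw [← pow_add, hj]
  unfold etaj
  push_cast
  rw [mul_sub, mul_one, one_div, inv_pow]
  congr 1
  rw [hp]; field_simp

lemma full_ent {n : ℕ} (μ : TState n n → ℝ) (hμ : ∀ z, 0 ≤ μ z) (hsum : ∑ z, μ z = 1)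
    (hsS : ∀ z, μ z ≠ 0 → z ∈ Stief n n) :
    HH μ + Real.log (SF n n).card ≤ 9 * EntTot μ := by
  set T : ℕ → ℝ := fun m => ∑ z ∈ SF n n, μ z * Real.log (FS μ (Lm n m) z) with hT
  have hst : ∀ j : Fin n, T (j.val + 1) - T j.val ≤ Eset μ (Sj j ×ˢ {j}) + 4 * (Eset μ ((univ.erase j) ×ˢ {j}) + Eset μ ({j} ×ˢ Gt j)) - Real.log (1 - etaj j) := by
    intro j
    have := stage_main μ j hμ hsum hsS (fun z h => stief_li.1 (hsS z h)) rfl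
    have e1 : Lm n j.val = Sj j := by ext i; simp [Lm, Sj]
    have e2 : Lm n (j.val + 1) = insert j (Sj j) := by
      ext i; simp only [Lm, Sj, mem_filter, mem_univ, true_and, mem_insert, Fin.ext_iff, Fin.lt_def]; omega
    simp only [hT, e1, e2]
    linarith
  have h1 := Finset.sum_le_sum (fun j (_ : j ∈ (univ : Finset (Fin n))) => hst j)
  rw [Fin.sum_univ_eq_sum_range (fun m => T (m+1) - T m), Finset.sum_range_sub] at h1
  simp only [Finset.sum_add_distrib, Finset.sum_sub_distrib, ← Finset.mul_sum] at h1
  have a1 := sum_Eset_le μ hμ (fun j => Sj j ×ˢ {j})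
    (by intro j p hp; rw [mem_product, mem_singleton, mem_Sj] at hp; rw [hp.2]; exact hp.1.ne)
    (by intro i j h; rw [Finset.disjoint_left]; intro p hp hq; rw [mem_product, mem_singleton] at hp hq; exact h (hp.2.symm.trans hq.2))
  have a2 := sum_Eset_le μ hμ (fun j => (univ.erase j) ×ˢ {j})
    (by intro j p hp; rw [mem_product, mem_singleton] at hp; rw [hp.2]; exact (mem_erase.1 hp.1).1)
    (by intro i j h; rw [Finset.disjoint_left]; intro p hp hq; rw [mem_product, mem_singleton] at hp hq; exact h (hp.2.symm.trans hq.2))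
  have a3 := sum_Eset_le μ hμ (fun j => {j} ×ˢ Gt j)
    (by intro j p hp; rw [mem_product, mem_singleton] at hp; rw [hp.1]; exact (by simpa [Gt] using hp.2 : j < p.2).ne)
    (by intro i j h; rw [Finset.disjoint_left]; intro p hp hq; rw [mem_product, mem_singleton] at hp hq; exact h (hp.1.symm.trans hq.1))
  have hT0 : T 0 = 0 := by
    have : Lm n 0 = ∅ := by simp [Lm]
    simp only [hT, this, FS_empty, hsum, Real.log_one, mul_zero, Finset.sum_const_zero]
  have hsG : ∑ z ∈ SF n n, μ z = 1 := by
    rw [← hsum]; apply Finset.sum_subset (Finset.subset_univ _); intro z _ hz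
    by_contra h; exact hz (mem_SF.2 (hsS z h))
  have hHG : ∑ z ∈ SF n n, hh (μ z) = HH μ := by
    apply Finset.sum_subset (Finset.subset_univ _); intro z _ hz
    have : μ z = 0 := by by_contra h; exact hz (mem_SF.2 (hsS z h))
    rw [this, hh_zero]
  have hN : (0:ℝ) < Fintype.card (TState n n) := by exact_mod_cast Fintype.card_pos
  have hTn : T n = HH μ + Real.log (Fintype.card (TState n n)) := by
    have e : Lm n n = univ := by ext i; simp [Lm]
    simp only [hT, e, FS_univ]
    rw [← hHG]
    have : ∀ z ∈ SF n n, μ z * Real.log ((Fintype.card (TState n n) : ℝ) * μ z) = hh (μ z) + μ z * Real.log (Fintype.card (TState n n)) := by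
      intro z _
      by_cases h : μ z = 0
      · simp [h, hh]
      · rw [Real.log_mul hN.ne' h]; unfold hh; ring
    rw [Finset.sum_congr rfl this, Finset.sum_add_distrib, ← Finset.sum_mul, hsG, one_mul]
  have hl : Real.log (SF n n).card = Real.log (Fintype.card (TState n n)) + ∑ j : Fin n, Real.log (1 - etaj j) := by
    have hne : ∀ j : Fin n, (1 - etaj j) ≠ 0 := fun j => by have := etaj_le j; linarith
    rw [card_SF, Real.log_mul hN.ne' (Finset.prod_ne_zero_iff.2 (fun j _ => hne j)), Real.log_prod (fun j _ => hne j)]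
  rw [hl]
  linarith


def uF (n k : ℕ) (z : TState n k) : ℝ := by classical exact if z ∈ SF n k then ((SF n k).card : ℝ)⁻¹ else 0

lemma uF_def (n k : ℕ) [DecidableEq (TState n k)] (z : TState n k) : uF n k z = if z ∈ SF n k then ((SF n k).card : ℝ)⁻¹ else 0 := by
  unfold uF; congr

lemma uF_eq (n k : ℕ) : unifOn (Stief n k) = uF n k := by
  classical
  ext z
  rw [uF_def]; unfold unifOn
  have : Nat.card (Stief n k) = (SF n k).card := by
    rw [Nat.card_eq_fintype_card, ← Set.toFinset_card]; congr 1; ext z; simp [mem_SF]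
  simp only [mem_SF, this]

lemma Qpow_stief {n k : ℕ} (t : ℕ) {x : TState n k} (hx : x ∈ Stief n k) (z) (hz : (transQ n k ^ t) x z ≠ 0) : z ∈ Stief n k := by
  by_contra h
  exact hz (Qpow_supp (· ∈ Stief n k) (fun a b z hab h => (stief_sg hab z).1 h) t x z hx h)

lemma HH_zero {n k : ℕ} (x : TState n k) : HH ((transQ n k ^ 0) x) = 0 := by
  unfold HH
  apply Finset.sum_eq_zero
  intro z _
  rw [pow_zero, Matrix.one_apply]; split_ifs <;> simp [hh]

lemma exp_bound {r : ℝ} (h0 : 0 ≤ 1 - r) (t : ℕ) : (1 - r)^t ≤ Real.exp (-(r * t)) := by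
  have h1 : 1 - r ≤ Real.exp (-r) := by have := Real.add_one_le_exp (-r); linarith
  calc (1-r)^t ≤ (Real.exp (-r))^t := pow_le_pow_left₀ h0 h1 t
    _ = _ := by rw [← Real.exp_nat_mul]; congr 1; ring

lemma part2_full {n : ℕ} (hn : 64 ≤ n) (t : ℕ) (ht : 27 * (n:ℝ)^2 * Real.log n ≤ t) (x : TState n n) (hx : x ∈ Stief n n) :
    tvDist ((transQ n n ^ t) x) (uF n n) ≤ 3/16 := by
  classical
  have hn2 : 2 ≤ n := by omega
  have hnR : (64:ℝ) ≤ n := by exact_mod_cast hn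
  set M := (n:ℝ) * ((n:ℝ) - 1) with hM
  have hM0 : 0 < M := by rw [hM]; nlinarith
  have hMn : M ≤ (n:ℝ)^2 := by rw [hM]; nlinarith
  have hlogn : 0 < Real.log n := Real.log_pos (by linarith)
  set r := 1 / (9 * M) with hr
  have hM1 : 1 ≤ M := by rw [hM]; nlinarith
  have hr0 : 0 < r := by positivity
  have hr1 : r ≤ 1 := by rw [hr, div_le_one (by positivity)]; linarith
  set D : ℕ → ℝ := fun t => HH ((transQ n n ^ t) x) + Real.log (SF n n).card with hD
  have hcontr : ∀ t, D (t+1) ≤ D t - r * (D t - 0) := by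
    intro t
    have h1 := ent_step hn2 ((transQ n n ^ t) x) (Qpow_nonneg hn2 t x)
    have h2 := full_ent ((transQ n n ^ t) x) (Qpow_nonneg hn2 t x) (Qpow_sum hn2 t x) (Qpow_stief t hx)
    rw [← Qpow_succ, ← hM] at h1
    have h3 : r * D t ≤ EntTot ((transQ n n ^ t) x) / M := by
      rw [hr, div_mul_eq_mul_div, one_mul, div_le_div_iff₀ (by positivity) hM0]
      simp only [hD]; nlinarith
    simp only [hD] at h3 ⊢
    linarith
  have hit := contract_iter D r 0 hr1 hcontr t
  simp only [zero_add, sub_zero] at hit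
  have hD0 : D 0 ≤ (n:ℝ)^2 := by
    simp only [hD, HH_zero, zero_add]
    have hc : (SF n n).card ≤ 2^(n*n) := by
      refine (Finset.card_le_univ _).trans (le_of_eq ?_)
      rw [Fintype.card_fun, Fintype.card_fun, ZMod.card, Fintype.card_fin, ← pow_mul]
    have hpos : 0 < (SF n n).card := Finset.card_pos.2 ⟨x, mem_SF.2 hx⟩
    have : Real.log (SF n n).card ≤ Real.log ((2:ℝ)^(n*n)) := Real.log_le_log (by exact_mod_cast hpos) (by exact_mod_cast hc)
    rw [Real.log_pow] at this
    have l2 : Real.log 2 ≤ 1 := by have := Real.log_two_lt_d9; linarith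
    push_cast at this
    nlinarith [mul_le_mul_of_nonneg_left l2 (show (0:ℝ) ≤ n*n by positivity)]
  have hpow : (1 - r)^t ≤ ((n:ℝ)^3)⁻¹ := by
    refine (exp_bound (by linarith) t).trans ?_
    have : 3 * Real.log n ≤ r * t := by
      rw [hr, div_mul_eq_mul_div, one_mul, le_div_iff₀ (by positivity)]
      nlinarith [mul_le_mul_of_nonneg_right hMn hlogn.le]
    rw [← Real.exp_log (show (0:ℝ) < ((n:ℝ)^3)⁻¹ by positivity), Real.exp_le_exp, Real.log_inv, Real.log_pow]
    push_cast; linarith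
  have hfin : D t ≤ 1/64 := by
    refine hit.trans ?_
    have h0 : 0 ≤ (1-r)^t := pow_nonneg (by linarith) t
    calc (1-r)^t * D 0 ≤ (1-r)^t * (n:ℝ)^2 := by gcongr
      _ ≤ ((n:ℝ)^3)⁻¹ * (n:ℝ)^2 := by gcongr
      _ = 1 / n := by field_simp
      _ ≤ 1/64 := by gcongr
  have := pinsker (SF n n) ((transQ n n ^ t) x) (Qpow_nonneg hn2 t x) (Qpow_sum hn2 t x)
    (fun z hz => by by_contra h; exact hz (mem_SF.2 (Qpow_stief t hx z h))) hfin
  convert this using 2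
  ext z; rw [uF_def]

/-- dual description of spanning -/
def dt {k : ℕ} (l v : Fin k → ZMod 2) : ZMod 2 := ∑ i, l i * v i

lemma dt_add {k : ℕ} (l v w : Fin k → ZMod 2) : dt l (v + w) = dt l v + dt l w := by
  simp [dt, mul_add, Finset.sum_add_distrib]

lemma span_iff {n k : ℕ} (z : TState n k) (S : Set (Fin n)) :
    Submodule.span (ZMod 2) (z '' S) = ⊤ ↔ ∀ l : Fin k → ZMod 2, l ≠ 0 → ∃ i ∈ S, dt l (z i) ≠ 0 := by
  constructor
  · intro h l hl
    by_contra hcon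
    push Not at hcon
    let f : (Fin k → ZMod 2) →ₗ[ZMod 2] ZMod 2 :=
      { toFun := dt l, map_add' := dt_add l, map_smul' := by intro c v; simp [dt, Finset.mul_sum]; congr 1; ext i; ring }
    have h1 : Submodule.span (ZMod 2) (z '' S) ≤ LinearMap.ker f := by
      rw [Submodule.span_le]; rintro _ ⟨i, hi, rfl⟩; exact hcon i hi
    rw [h] at h1
    apply hl
    ext i
    have h2 : (Pi.single i 1 : Fin k → ZMod 2) ∈ LinearMap.ker f := h1 trivial
    have h3 : dt l (Pi.single i 1) = 0 := h2
    rw [dt, Finset.sum_eq_single i] at h3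
    · simpa using h3
    · intro j _ hj; simp [hj]
    · simp
  · intro h
    by_contra hne
    obtain ⟨f, hf, hle⟩ := Submodule.exists_le_ker_of_lt_top _ (lt_top_iff_ne_top.2 hne)
    have hfl : ∀ v, f v = dt (fun i => f (Pi.single i 1)) v := by
      intro v
      rw [LinearMap.pi_apply_eq_sum_univ f v]
      unfold dt
      apply Finset.sum_congr rfl; intro i _
      rw [smul_eq_mul, mul_comm]; congr 2
      ext j; simp [Pi.single_apply, eq_comm]
    obtain ⟨i, hi, hi2⟩ := h (fun i => f (Pi.single i 1)) (by
      intro h0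
      apply hf
      apply LinearMap.ext; intro v
      rw [hfl, h0]; simp [dt])
    rw [← hfl] at hi2
    exact hi2 (hle (Submodule.subset_span ⟨i, hi, rfl⟩))

lemma stief_iff {n k : ℕ} (z : TState n k) : z ∈ Stief n k ↔ ∀ l : Fin k → ZMod 2, l ≠ 0 → ∃ i, dt l (z i) ≠ 0 := by
  have := span_iff z Set.univ
  rw [Set.image_univ] at this
  show Submodule.span (ZMod 2) (Set.range z) = ⊤ ↔ _
  simpa using this


def push {X Y : Type*} [Fintype X] [DecidableEq Y] (π : X → Y) (f : X → ℝ) (y : Y) : ℝ :=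
  ∑ x, if π x = y then f x else 0

lemma tv_push {X Y : Type*} [Fintype X] [Fintype Y] [DecidableEq Y] (π : X → Y) (f g : X → ℝ) :
    tvDist (push π f) (push π g) ≤ tvDist f g := by
  unfold tvDist push
  apply mul_le_mul_of_nonneg_left _ (by norm_num)
  calc ∑ y, |(∑ x, if π x = y then f x else 0) - (∑ x, if π x = y then g x else 0)|
      ≤ ∑ y, ∑ x, if π x = y then |f x - g x| else 0 := by
        apply Finset.sum_le_sum; intro y _
        rw [← Finset.sum_sub_distrib]
        refine (Finset.abs_sum_le_sum_abs _ _).trans (le_of_eq ?_)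
        apply Finset.sum_congr rfl; intro x _
        split_ifs <;> simp
    _ = ∑ x, |f x - g x| := by
        rw [Finset.sum_comm]; simp

def prj {n k : ℕ} (z : TState n (k+1)) : TState n k := fun i => Fin.init (z i)

lemma prj_sg {n k : ℕ} (a b : Fin n) (z : TState n (k+1)) : prj (sg a b z) = sg a b (prj z) := by
  ext i l
  unfold prj sg
  by_cases h : i = b
  · subst h; simp [Fin.init]
  · simp [h]

lemma push_step {n k : ℕ} (μ : TState n (k+1) → ℝ) : push prj (stepf μ) = stepf (push prj μ) := by
  ext y
  unfold stepf
  have h : ∀ p ∈ (univ : Finset (Fin n)).offDiag, push prj (fun w => μ (sg p.1 p.2 w)) y = push prj μ (sg p.1 p.2 y) := by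
    intro p hp
    have hne : p.1 ≠ p.2 := by simpa using hp
    unfold push
    rw [← sum_invol (sg_invol hne)]
    apply Finset.sum_congr rfl; intro x _
    beta_reduce
    rw [sg_invol hne, prj_sg]
    congr 1
    apply propext
    constructor
    · intro h; rw [← h, sg_invol hne]
    · intro h; rw [h, sg_invol hne]
  rw [← Finset.sum_congr rfl h]
  unfold push
  rw [Finset.sum_comm, Finset.sum_div, ← Finset.sum_add_distrib, Finset.sum_div]
  apply Finset.sum_congr rfl; intro x _
  split_ifs <;> simp

lemma push_pow {n k : ℕ} (t : ℕ) (x : TState n (k+1)) : push prj ((transQ n (k+1) ^ t) x) = (transQ n k ^ t) (prj x) := by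
  induction t with
  | zero =>
    ext y; unfold push
    simp only [pow_zero, Matrix.one_apply]
    rw [Finset.sum_eq_single x]
    · simp
    · intro z _ hz; simp [Ne.symm hz]
    · simp
  | succ t ih => rw [Qpow_succ, push_step, ih, Qpow_succ]

lemma prj_stief {n k : ℕ} {z : TState n (k+1)} (h : z ∈ Stief n (k+1)) : prj z ∈ Stief n k := by
  rw [stief_iff] at h ⊢
  intro l hl
  obtain ⟨i, hi⟩ := h (Fin.snoc l 0) (by
    intro h0; apply hl; ext j
    have := congrFun h0 (Fin.castSucc j)
    simpa using this)
  refine ⟨i, ?_⟩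
  unfold dt at *
  rw [Fin.sum_univ_castSucc] at hi
  simpa [prj, Fin.init] using hi

/-- attach a last column -/
def att {n k : ℕ} (y : TState n k) (c : Fin n → ZMod 2) : TState n (k+1) := fun i => Fin.snoc (y i) (c i)

lemma att_stief {n k : ℕ} {y : TState n k} (hy : y ∈ Stief n k) (c) :
    att y c ∈ Stief n (k+1) ↔ ∀ l, c ≠ fun i => dt l (y i) := by
  rw [stief_iff]
  have hd : ∀ (l : Fin (k+1) → ZMod 2) i, dt l (att y c i) = dt (Fin.init l) (y i) + l (Fin.last k) * c i := by
    intro l i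
    unfold dt att; rw [Fin.sum_univ_castSucc]; simp [Fin.init]
  constructor
  · intro h l hc
    obtain ⟨i, hi⟩ := h (Fin.snoc l 1) (by
      intro h0; have := congrFun h0 (Fin.last k); simp at this)
    rw [hd] at hi
    simp only [Fin.init_snoc, Fin.snoc_last, one_mul] at hi
    rw [hc] at hi
    exact hi (CharTwo.add_self_eq_zero _)
  · intro h l hl
    by_cases hlast : l (Fin.last k) = 0
    · rw [stief_iff] at hy
      obtain ⟨i, hi⟩ := hy (Fin.init l) (by
        intro h0; apply hl; ext j
        refine Fin.lastCases hlast (fun j => ?_) j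
        exact congrFun h0 j)
      exact ⟨i, by rw [hd, hlast]; simpa using hi⟩
    · have h1 : l (Fin.last k) = 1 := (zmod2_cases _).resolve_left hlast
      by_contra hcon
      push Not at hcon
      apply h (Fin.init l)
      ext i
      have := hcon i
      rw [hd, h1, one_mul] at this
      exact (CharTwo.add_eq_zero.1 this).symm

lemma fib_card {n k : ℕ} {y : TState n k} (hy : y ∈ Stief n k) :
    #{z ∈ SF n (k+1) | prj z = y} = 2^n - 2^k := by
  classical
  have h1 : #{z ∈ SF n (k+1) | prj z = y} = #(univ.filter (fun c : Fin n → ZMod 2 => ∀ l, c ≠ fun i => dt l (y i))) := by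
    apply Finset.card_bij' (fun z _ => fun i => z i (Fin.last k)) (fun c _ => att y c)
    · intro z hz
      obtain ⟨hz1, rfl⟩ := Finset.mem_filter.1 hz
      have e : att (prj z) (fun i => z i (Fin.last k)) = z := by
        ext i : 1; simp [att, prj]
      simp only [mem_filter, mem_univ, true_and]
      rw [← att_stief hy, e]; exact mem_SF.1 hz1
    · intro c hc
      rw [mem_filter] at hc ⊢
      refine ⟨mem_SF.2 ((att_stief hy c).2 hc.2), ?_⟩
      ext i : 1; simp [att, prj]
    · intro z hz
      obtain ⟨hz1, rfl⟩ := Finset.mem_filter.1 hz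
      ext i : 1; simp [att, prj]
    · intro c hc
      ext i; simp [att]
  have h2 : univ.filter (fun c : Fin n → ZMod 2 => ∀ l, c ≠ fun i => dt l (y i)) =
      (univ.image (fun l : Fin k → ZMod 2 => fun i => dt l (y i)))ᶜ := by
    ext c; simp [eq_comm]
  have hinj : Function.Injective (fun l : Fin k → ZMod 2 => fun i => dt l (y i)) := by
    intro l m hlm
    by_contra hne
    obtain ⟨i, hi⟩ := (stief_iff y).1 hy (l + m) (by
      intro h0; exact hne (by
        ext j
        have := congrFun h0 j
        exact CharTwo.add_eq_zero.1 this))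
    apply hi
    have e : dt (l + m) (y i) = dt l (y i) + dt m (y i) := by simp [dt, add_mul, Finset.sum_add_distrib]
    have := congrFun hlm i
    simp only at this
    rw [e, this]; exact CharTwo.add_self_eq_zero _
  rw [h1, h2, Finset.card_compl, Finset.card_image_of_injective _ hinj]
  simp

lemma push_uF {n k : ℕ} (hk : k < n) : push prj (uF n (k+1)) = uF n k := by
  classical
  have hc : 0 < 2^n - 2^k := Nat.sub_pos_of_lt (Nat.pow_lt_pow_right (by norm_num) hk)
  have hcard : #(SF n (k+1)) = #(SF n k) * (2^n - 2^k) := by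
    rw [Finset.card_eq_sum_card_fiberwise (f := prj) (t := SF n k)
      (fun z hz => mem_SF.2 (prj_stief (mem_SF.1 hz)))]
    rw [Finset.sum_congr rfl (fun y hy => fib_card (mem_SF.1 hy))]
    simp
  ext y
  unfold push
  have e : ∀ x : TState n (k+1), (if prj x = y then uF n (k+1) x else 0) =
      if x ∈ (SF n (k+1)).filter (fun z => prj z = y) then ((#(SF n (k+1)) : ℝ))⁻¹ else 0 := by
    intro x
    simp only [uF, mem_filter]
    by_cases h1 : prj x = y <;> by_cases h2 : x ∈ SF n (k+1) <;> simp [h1, h2]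
  rw [Finset.sum_congr rfl (fun x _ => e x), Finset.sum_ite_mem, Finset.univ_inter, Finset.sum_const]
  by_cases hy : y ∈ Stief n k
  · rw [fib_card hy, hcard]
    simp only [uF]
    rw [if_pos (mem_SF.2 hy)]
    have : ((2^n - 2^k : ℕ) : ℝ) ≠ 0 := by exact_mod_cast hc.ne'
    rw [Nat.cast_mul, nsmul_eq_mul, mul_inv, mul_comm, mul_assoc, inv_mul_cancel₀ this, mul_one]
  · have : (SF n (k+1)).filter (fun z => prj z = y) = ∅ := by
      ext z
      simp only [mem_filter, notMem_empty, iff_false, not_and]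
      intro hz h; exact hy (h ▸ prj_stief (mem_SF.1 hz))
    rw [this]
    simp only [uF]
    rw [if_neg (fun h => hy (mem_SF.1 h))]
    simp

lemma part2 (n : ℕ) (hn : 64 ≤ n) (t : ℕ) (ht : 27 * (n:ℝ)^2 * Real.log n ≤ t) (j : ℕ) :
    ∀ k, k + j = n → ∀ x ∈ Stief n k, tvDist ((transQ n k ^ t) x) (uF n k) ≤ 3/16 := by
  induction j with
  | zero =>
    intro k hk x hx
    obtain rfl : k = n := by simpa using hk
    exact part2_full hn t ht x hx
  | succ j ih =>
    intro k hk x hx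
    have hlt : k < n := by omega
    have hc : 0 < 2^n - 2^k := Nat.sub_pos_of_lt (Nat.pow_lt_pow_right (by norm_num) hlt)
    rw [← fib_card hx, Finset.card_pos] at hc
    obtain ⟨w, hw⟩ := hc
    obtain ⟨hw1, rfl⟩ := Finset.mem_filter.1 hw
    rw [← push_pow, ← push_uF hlt]
    exact (tv_push _ _ _).trans (ih (k+1) (by omega) w (mem_SF.1 hw1))


def spansS {n k : ℕ} (S : Finset (Fin n)) (z : TState n k) : Prop :=
  ∀ l : Fin k → ZMod 2, l ≠ 0 → ∃ i ∈ S, dt l (z i) ≠ 0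

lemma spansS_lc {n k : ℕ} {S : Finset (Fin n)} {z : TState n k} (h : spansS S z) (v : Fin k → ZMod 2) :
    ∃ c : Fin n → ZMod 2, ∑ a ∈ S, c a • z a = v := by
  have h1 := (span_iff z (S : Set (Fin n))).2 (by simpa [spansS] using h)
  have h2 : v ∈ Submodule.span (ZMod 2) (z '' (S : Set (Fin n))) := by rw [h1]; trivial
  obtain ⟨c, hc⟩ := Submodule.mem_span_image_finset_iff_exists_fun' (ZMod 2) |>.1 h2
  exact ⟨c, hc⟩

def gadd {n k : ℕ} (A : Finset (Fin n × Fin n)) (z : TState n k) : (Fin n × Fin n → ZMod 2) →+ TState n k where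
  toFun ε := fun i => ∑ p ∈ A, if p.2 = i then ε p • z p.1 else 0
  map_zero' := by ext i; simp
  map_add' := by
    intro x y; ext i : 1
    simp only [Pi.add_apply]
    rw [← Finset.sum_add_distrib]
    apply Finset.sum_congr rfl; intro p _
    split_ifs
    · rw [add_smul]
    · simp

lemma gadd_apply {n k : ℕ} (S : Finset (Fin n)) (z : TState n k) (ε) (i : Fin n) :
    gadd (S ×ˢ Sᶜ) z ε i = if i ∈ S then 0 else ∑ a ∈ S, ε (a, i) • z a := by
  show ∑ p ∈ S ×ˢ Sᶜ, (if p.2 = i then ε p • z p.1 else 0) = _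
  rw [Finset.sum_product]
  simp only [Finset.sum_ite_eq', Finset.mem_compl]
  split_ifs <;> simp_all

lemma gop_av {n k : ℕ} {S : Finset (Fin n)} {z : TState n k} (h : spansS S z) (g : TState n k → ℝ) :
    av (fun ε => g (gop (S ×ˢ Sᶜ) ε z)) = av (fun y => g (S.piecewise z y)) := by
  have h1 := av_surj (gadd (S ×ˢ Sᶜ) z) (fun v => g (S.piecewise z (v + z))) (by
    intro y
    choose c hc using fun i => spansS_lc h (y i)
    refine ⟨fun p => c p.2 p.1, fun x => ?_⟩
    congr 1
    ext i : 1
    by_cases hi : i ∈ S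
    · simp [hi]
    · simp only [hi, not_false_eq_true, Finset.piecewise_eq_of_notMem, Pi.add_apply]
      rw [gadd_apply, if_neg hi, hc])
  rw [av_shift (fun y => g (S.piecewise z y)) z] at h1
  rw [← h1]
  congr 1; ext ε; congr 1; ext i : 1
  by_cases hi : i ∈ S
  · have := gadd_apply S z ε i
    rw [if_pos hi] at this
    simp only [hi, Finset.piecewise_eq_of_mem]
    show z i + gadd (S ×ˢ Sᶜ) z ε i = z i
    rw [this, add_zero]
  · simp only [hi, not_false_eq_true, Finset.piecewise_eq_of_notMem, Pi.add_apply]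
    rw [add_comm]; rfl

lemma spansS_sg {n k : ℕ} {S : Finset (Fin n)} {a b : Fin n} (hb : b ∉ S) (z : TState n k) :
    spansS S (sg a b z) ↔ spansS S z := by
  unfold spansS sg
  have : ∀ i ∈ S, Function.update z b (z b + z a) i = z i := by
    intro i hi; rw [Function.update_of_ne]; rintro rfl; exact hb hi
  constructor
  · intro h l hl; obtain ⟨i, hi, hi2⟩ := h l hl; exact ⟨i, hi, by rwa [this i hi] at hi2⟩
  · intro h l hl; obtain ⟨i, hi, hi2⟩ := h l hl; exact ⟨i, hi, by rwa [this i hi]⟩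

lemma spansS_pw {n k : ℕ} {S : Finset (Fin n)} (z y : TState n k) :
    spansS S (S.piecewise z y) ↔ spansS S z := by
  unfold spansS
  have : ∀ i ∈ S, S.piecewise z y i = z i := by
    intro i hi; simp [hi]
  constructor
  · intro h l hl; obtain ⟨i, hi, hi2⟩ := h l hl; exact ⟨i, hi, by rwa [this i hi] at hi2⟩
  · intro h l hl; obtain ⟨i, hi, hi2⟩ := h l hl; exact ⟨i, hi, by rwa [this i hi]⟩

/-- number of states (as a real) -/
def NN (n k : ℕ) : ℝ := (Fintype.card (TState n k) : ℝ)

lemma NN_pos (n k : ℕ) : 0 < NN n k := by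
  unfold NN; exact_mod_cast Fintype.card_pos

/-- relative entropy w.r.t. uniform -/
def DD {n k : ℕ} (μ : TState n k → ℝ) : ℝ := ∑ z, μ z * Real.log (NN n k * μ z)

lemma DD_eq {n k : ℕ} (μ : TState n k → ℝ) (hs : ∑ z, μ z = 1) : DD μ = HH μ + Real.log (NN n k) := by
  unfold DD HH hh
  rw [← one_mul (Real.log (NN n k)), ← hs, Finset.sum_mul, ← Finset.sum_add_distrib]
  apply Finset.sum_congr rfl; intro z _
  by_cases h : μ z = 0
  · simp [h]
  · rw [Real.log_mul (NN_pos n k).ne' h]; ring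

open Classical in
/-- indicator that the rows in S do not span -/
def nsp {n k : ℕ} (S : Finset (Fin n)) (z : TState n k) : ℝ := if spansS S z then 0 else 1

lemma nsp_nonneg {n k : ℕ} (S : Finset (Fin n)) (z : TState n k) : 0 ≤ nsp S z := by
  unfold nsp; split_ifs <;> norm_num

lemma hh_ge {x : ℝ} (hx : 0 ≤ x) : -1 ≤ x * Real.log x := by
  have := psi_ge hx
  have h2 := sq_nonneg (Real.sqrt x - 1)
  unfold hh at this
  by_cases h : x ≤ 0
  · have : x = 0 := le_antisymm h hx
    simp [this]
  · push Not at h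
    linarith

lemma one_set {n k : ℕ} (μ : TState n k → ℝ) (hμ : ∀ z, 0 ≤ μ z) (S : Finset (Fin n)) :
    DD μ ≤ Eset μ (S ×ˢ Sᶜ) + ∑ z, μ z * Real.log (FS μ S z) + av (fun z : TState n k => nsp S z)
      + ∑ z, nsp S z * (μ z * Real.log (NN n k * μ z)) := by
  classical
  set Γ : Finset (TState n k) := univ.filter (fun z => spansS S z) with hΓ
  have hN := NN_pos n k
  have h1 := DVwords (S := S) (T := Sᶜ) disjoint_compl_right Γ (by
    intro a ha b hb z
    simp only [hΓ, mem_filter, mem_univ, true_and]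
    exact spansS_sg (by simpa using hb) z) μ (fun z => NN n k * μ z) hμ
    (fun z => mul_nonneg hN.le (hμ z)) (fun z _ h => mul_pos hN (lt_of_le_of_ne (hμ z) (Ne.symm h)))
  have h2 : ∑ z ∈ Γ, μ z * Real.log (av (fun ε => NN n k * μ (gop (S ×ˢ Sᶜ) ε z))) =
      ∑ z ∈ Γ, μ z * Real.log (FS μ S z) := by
    apply Finset.sum_congr rfl; intro z hz
    have hz' : spansS S z := by simpa [hΓ] using hz
    rw [gop_av hz' (fun z => NN n k * μ z), FS_av]
    congr 2
    rw [mul_comm, ← av_mul]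
    congr 1; ext y; rw [mul_comm]; rfl
  rw [h2] at h1
  have split : ∀ F : TState n k → ℝ, ∑ z, F z = ∑ z ∈ Γ, F z + ∑ z, nsp S z * F z := by
    intro F
    rw [hΓ, Finset.sum_filter, ← Finset.sum_add_distrib]
    apply Finset.sum_congr rfl; intro z _
    unfold nsp
    split_ifs <;> simp
  have e1 := split (fun z => μ z * Real.log (NN n k * μ z))
  have e2 := split (fun z => μ z * Real.log (FS μ S z))
  have h3 : -(∑ z, nsp S z * (μ z * Real.log (FS μ S z))) ≤ av (fun z : TState n k => nsp S z) := by
    have m := marginal_av μ (fun z => nsp S z * Real.log (FS μ S z)) S (by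
      intro z y
      rw [FS_dep μ S (S.piecewise z y) z (by intro i hi; simp [hi])]
      congr 1
      unfold nsp; simp only [spansS_pw])
    have e : ∑ z, nsp S z * (μ z * Real.log (FS μ S z)) = ∑ z, μ z * (nsp S z * Real.log (FS μ S z)) := by
      apply Finset.sum_congr rfl; intro z _; ring
    rw [e, ← m]
    rw [← mul_neg_one, ← av_mul]
    apply av_mono
    intro z
    have := hh_ge (FS_nonneg hμ S z)
    nlinarith [nsp_nonneg S z]
  unfold DD
  unfold Eset
  linarith

lemma superadd {n k : ℕ} (μ : TState n k → ℝ) (hμ : ∀ z, 0 ≤ μ z) (hs : ∑ z, μ z = 1) {S T : Finset (Fin n)}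
    (hST : Disjoint S T) :
    ∑ z, μ z * Real.log (FS μ S z) + ∑ z, μ z * Real.log (FS μ T z) ≤ DD μ := by
  have hN := NN_pos n k
  have hprod : ∑ z, FS μ S z * FS μ T z = NN n k := by
    have h1 := swap_sum S (fun z y => FS μ S z * FS μ T y)
    have h2 : ∀ z y : TState n k, FS μ S (S.piecewise z y) * FS μ T (S.piecewise y z) = FS μ S z * FS μ T z := by
      intro z y
      rw [FS_dep μ S (S.piecewise z y) z (by intro i hi; simp [hi]),
        FS_dep μ T (S.piecewise y z) z (by
          intro i hi
          have : i ∉ S := fun h => Finset.disjoint_left.1 hST h hi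
          simp [this])]
    simp only [h2, Finset.sum_const, Finset.card_univ, nsmul_eq_mul] at h1
    rw [← Finset.mul_sum] at h1
    have h3 : ∀ R : Finset (Fin n), ∑ z, FS μ R z = NN n k := by
      intro R
      have := marginal μ (fun _ => 1) R (by simp)
      simp only [mul_one, hs] at this
      exact this
    simp only [← Finset.mul_sum, ← Finset.sum_mul, h3] at h1
    have : NN n k * NN n k = NN n k * ∑ z, FS μ S z * FS μ T z := h1
    exact (mul_left_cancel₀ hN.ne' this).symm
  have hpt : ∀ z, μ z * Real.log (FS μ S z) + μ z * Real.log (FS μ T z) ≤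
      μ z * Real.log (NN n k * μ z) + (FS μ S z * FS μ T z / NN n k - μ z) := by
    intro z
    by_cases h : μ z = 0
    · have := mul_nonneg (FS_nonneg hμ S z) (FS_nonneg hμ T z)
      simp only [h, zero_mul, add_zero, zero_add, sub_zero]
      positivity
    · have hp : 0 < μ z := lt_of_le_of_ne (hμ z) (Ne.symm h)
      have hS := FS_pos hμ S z h
      have hT := FS_pos hμ T z h
      have hl := Real.log_le_sub_one_of_pos (x := FS μ S z * FS μ T z / (NN n k * μ z)) (by positivity)
      rw [Real.log_div (by positivity) (by positivity), Real.log_mul hS.ne' hT.ne'] at hl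
      have := mul_le_mul_of_nonneg_left hl hp.le
      have e : μ z * (FS μ S z * FS μ T z / (NN n k * μ z) - 1) = FS μ S z * FS μ T z / NN n k - μ z := by
        field_simp
      rw [e] at this
      linarith
  have := Finset.sum_le_sum (fun z (_ : z ∈ univ) => hpt z)
  rw [Finset.sum_add_distrib, Finset.sum_add_distrib, Finset.sum_sub_distrib, ← Finset.sum_div, hprod, hs,
    div_self hN.ne'] at this
  unfold DD; linarith


def wt {n k : ℕ} (l : Fin k → ZMod 2) (z : TState n k) : ℕ := #{j | dt l (z j) ≠ 0}

def pz {n k : ℕ} (r : ℝ) (z : TState n k) : ℝ := ∑ l ∈ univ.erase (0 : Fin k → ZMod 2), r ^ (wt l z)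

def col {n q : ℕ} (i : Fin q) (c : Fin n → Fin q) : Finset (Fin n) := univ.filter (fun j => c j = i)

lemma av_sum {ι κ : Type*} [Fintype ι] (s : Finset κ) (F : ι → κ → ℝ) :
    av (fun i => ∑ p ∈ s, F i p) = ∑ p ∈ s, av (fun i => F i p) := by
  unfold av; rw [Finset.sum_comm, Finset.sum_div]

lemma av_ind {q : ℕ} (i : Fin q) : av (fun x : Fin q => if x = i then (1:ℝ) else 0) = 1 / q := by
  unfold av; simp

lemma av_col {n q : ℕ} (hq : 0 < q) (i : Fin q) (a : Fin n) :
    av (fun c : Fin n → Fin q => if c a = i then (1:ℝ) else 0) = 1 / q := by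
  have h := av_prod_pi (fun (j : Fin n) (x : Fin q) => if j = a then (if x = i then (1:ℝ) else 0) else 1)
  have : Nonempty (Fin q) := ⟨i⟩
  have e1 : ∀ c : Fin n → Fin q, (∏ j, if j = a then (if c j = i then (1:ℝ) else 0) else 1) = if c a = i then 1 else 0 := by
    intro c; simp [Finset.prod_ite_eq']
  simp only [e1] at h
  rw [h, Finset.prod_eq_single a]
  · simp only [if_true]; exact av_ind i
  · intro b _ hb; simp only [hb, if_false]; exact av_const 1
  · simp

lemma av_Eset {n k q : ℕ} (hq : 0 < q) (i : Fin q) (μ : TState n k → ℝ) (hμ : ∀ z, 0 ≤ μ z) :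
    av (fun c : Fin n → Fin q => Eset μ (col i c ×ˢ (col i c)ᶜ)) ≤ EntTot μ * (1 / q) := by
  have h1 : ∀ c : Fin n → Fin q, Eset μ (col i c ×ˢ (col i c)ᶜ) ≤
      ∑ p ∈ (univ : Finset (Fin n)).offDiag, (if c p.1 = i then (1:ℝ) else 0) * ent1 (sg p.1 p.2) μ := by
    intro c
    unfold Eset
    calc ∑ p ∈ col i c ×ˢ (col i c)ᶜ, ent1 (sg p.1 p.2) μ 
        = ∑ p ∈ col i c ×ˢ (col i c)ᶜ, (if c p.1 = i then (1:ℝ) else 0) * ent1 (sg p.1 p.2) μ := by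
          apply Finset.sum_congr rfl; intro p hp
          have : c p.1 = i := by
            have := (Finset.mem_product.1 hp).1; simpa [col] using this
          rw [if_pos this, one_mul]
      _ ≤ _ := by
          apply Finset.sum_le_sum_of_subset_of_nonneg
          · intro p hp
            obtain ⟨ha, hb⟩ := Finset.mem_product.1 hp
            simp only [mem_offDiag, mem_univ, true_and]
            intro h; rw [h] at ha; exact (Finset.mem_compl.1 hb) ha
          · intro p _ _
            have := ent1_nonneg (sg p.1 p.2) μ hμ
            split_ifs <;> simp [this]
  refine (av_mono h1).trans (le_of_eq ?_)
  rw [av_sum]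
  simp only [av_mul, av_col hq]
  unfold EntTot
  rw [Finset.sum_mul]
  apply Finset.sum_congr rfl; intro p _; ring

lemma av_nsp_le {n k q : ℕ} (hq : 0 < q) (i : Fin q) (z : TState n k) :
    av (fun c : Fin n → Fin q => nsp (col i c) z) ≤ pz (1 - 1 / (q:ℝ)) z := by
  classical
  have : Nonempty (Fin q) := ⟨i⟩
  have h1 : ∀ c : Fin n → Fin q, nsp (col i c) z ≤ ∑ l ∈ univ.erase (0 : Fin k → ZMod 2),
      ∏ j, (if dt l (z j) ≠ 0 then (1 - if c j = i then (1:ℝ) else 0) else 1) := by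
    intro c
    have hnn : ∀ l : Fin k → ZMod 2, 0 ≤ ∏ j, (if dt l (z j) ≠ 0 then (1 - if c j = i then (1:ℝ) else 0) else 1) := by
      intro l; apply Finset.prod_nonneg; intro j _
      split_ifs <;> norm_num
    unfold nsp
    split_ifs with h
    · exact Finset.sum_nonneg (fun l _ => hnn l)
    · unfold spansS at h
      push Not at h
      obtain ⟨l, hl, hz⟩ := h
      refine le_trans (le_of_eq ?_) (Finset.single_le_sum (fun l _ => hnn l) (Finset.mem_erase.2 ⟨hl, mem_univ l⟩))
      symm
      apply Finset.prod_eq_one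
      intro j _
      by_cases hj : dt l (z j) = 0
      · simp [hj]
      · have : c j ≠ i := fun h => hj (hz j (by simp [col, h]))
        simp [this]
  refine (av_mono h1).trans (le_of_eq ?_)
  rw [av_sum]
  unfold pz
  apply Finset.sum_congr rfl; intro l _
  have h2 := av_prod_pi (fun (j : Fin n) (x : Fin q) => if dt l (z j) ≠ 0 then (1 - if x = i then (1:ℝ) else 0) else 1)
  rw [h2]
  have h3 : ∀ j, av (fun x : Fin q => if dt l (z j) ≠ 0 then (1 - if x = i then (1:ℝ) else 0) else 1) =
      if dt l (z j) ≠ 0 then 1 - 1 / (q:ℝ) else 1 := by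
    intro j
    split_ifs
    · have e : (fun x : Fin q => (1 - if x = i then (1:ℝ) else 0)) = fun x => 1 + (if x = i then (1:ℝ) else 0) * (-1) := by
        ext x; ring
      rw [e, av_add, av_mul, av_ind, av_const]; ring
    · exact av_const 1
  simp only [h3]
  rw [Finset.prod_ite]
  simp [wt]

lemma dt_single {k : ℕ} (l : Fin k → ZMod 2) (j : Fin k) : dt l (Pi.single j 1) = l j := by
  unfold dt; simp [Pi.single_apply]

lemma av_row_r {k : ℕ} (l : Fin k → ZMod 2) (hl : l ≠ 0) (r : ℝ) :
    av (fun v : Fin k → ZMod 2 => if dt l v ≠ 0 then r else 1) = (1 + r) / 2 := by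
  obtain ⟨j, hj⟩ : ∃ j, l j ≠ 0 := by by_contra h; push Not at h; exact hl (funext h)
  have hj1 : l j = 1 := (zmod2_cases _).resolve_left hj
  have h1 := av_shift (fun v : Fin k → ZMod 2 => if dt l v ≠ 0 then r else 1) (Pi.single j 1)
  have h2 := av_add (fun v : Fin k → ZMod 2 => if dt l v ≠ 0 then r else 1) 
    (fun v : Fin k → ZMod 2 => if dt l (v + Pi.single j 1) ≠ 0 then r else 1)
  have h3 : ∀ v : Fin k → ZMod 2, (if dt l v ≠ 0 then r else 1) + (if dt l (v + Pi.single j 1) ≠ 0 then r else 1) = 1 + r := by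
    intro v
    rw [dt_add, dt_single, hj1]
    rcases zmod2_cases (dt l v) with h | h <;> rw [h]
    · simp
    · have : (1 + 1 : ZMod 2) = 0 := by decide
      simp [this]; ring
  simp only [h3] at h2
  rw [av_const] at h2
  linarith

lemma av_pz {n k : ℕ} (r : ℝ) (hr : 0 ≤ r) : av (fun z : TState n k => pz r z) ≤ 2 ^ k * ((1 + r) / 2) ^ n := by
  unfold pz
  rw [av_sum]
  have h1 : ∀ l ∈ univ.erase (0 : Fin k → ZMod 2), av (fun z : TState n k => r ^ (wt l z)) = ((1 + r) / 2) ^ n := by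
    intro l hl
    have h2 := av_prod_pi (fun (_ : Fin n) (v : Fin k → ZMod 2) => if dt l v ≠ 0 then r else 1)
    have h3 : ∀ z : TState n k, (∏ j, if dt l (z j) ≠ 0 then r else 1) = r ^ (wt l z) := by
      intro z; rw [Finset.prod_ite]; simp [wt]
    simp only [h3] at h2
    rw [h2]
    simp only [av_row_r l (Finset.mem_erase.1 hl).1 r]
    rw [Finset.prod_const, Finset.card_univ, Fintype.card_fin]
  rw [Finset.sum_congr rfl h1, Finset.sum_const, nsmul_eq_mul]
  apply mul_le_mul_of_nonneg_right _ (by positivity)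
  have : #(univ.erase (0 : Fin k → ZMod 2)) ≤ 2 ^ k := by
    refine (Finset.card_le_univ _).trans ?_
    simp
  exact_mod_cast this

lemma psi_term {n k : ℕ} (μ : TState n k → ℝ) (hμ : ∀ z, 0 ≤ μ z) (hs : ∑ z, μ z = 1) (p : TState n k → ℝ)
    (hp0 : ∀ z, 0 ≤ p z) (hp1 : ∀ z, p z ≤ 1) (B : Finset (TState n k)) (δ : ℝ) (hδ0 : 0 ≤ δ)
    (hδ : ∀ z, z ∉ B → p z ≤ δ) :
    ∑ z, p z * (μ z * Real.log (NN n k * μ z)) ≤ δ * DD μ + δ + Real.log (NN n k) * ∑ z ∈ B, μ z := by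
  classical
  have hN := NN_pos n k
  have hN1 : 1 ≤ NN n k := by unfold NN; exact_mod_cast Fintype.card_pos
  have hlN : 0 ≤ Real.log (NN n k) := Real.log_nonneg hN1
  have hle1 : ∀ z, μ z ≤ 1 := by
    intro z; rw [← hs]; exact Finset.single_le_sum (fun w _ => hμ w) (mem_univ z)
  have hpt : ∀ z, p z * (μ z * Real.log (NN n k * μ z)) ≤
      δ * (μ z * Real.log (NN n k * μ z) - μ z + 1 / NN n k) + δ * μ z +
        Real.log (NN n k) * (if z ∈ B then μ z else 0) := by
    intro z
    have hpsi : 0 ≤ μ z * Real.log (NN n k * μ z) - μ z + 1 / NN n k := by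
      have h1 := psi_ge (mul_nonneg hN.le (hμ z))
      have h2 : 0 ≤ hh (NN n k * μ z) - NN n k * μ z + 1 := (sq_nonneg _).trans h1
      unfold hh at h2
      have : μ z * Real.log (NN n k * μ z) - μ z + 1 / NN n k = (NN n k * μ z * Real.log (NN n k * μ z) - NN n k * μ z + 1) / NN n k := by
        field_simp
      rw [this]; positivity
    by_cases hz : z ∈ B
    · rw [if_pos hz]
      have h0 : μ z * Real.log (NN n k * μ z) ≤ Real.log (NN n k) * μ z := by
        by_cases h : μ z = 0
        · simp [h]
        · have hp : 0 < μ z := lt_of_le_of_ne (hμ z) (Ne.symm h)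
          rw [mul_comm (Real.log _)]
          apply mul_le_mul_of_nonneg_left _ hp.le
          apply Real.log_le_log (by positivity)
          nlinarith [hle1 z]
      have h3 : p z * (μ z * Real.log (NN n k * μ z)) ≤ Real.log (NN n k) * μ z := by
        have h4 : 0 ≤ Real.log (NN n k) * μ z := mul_nonneg hlN (hμ z)
        nlinarith [hp0 z, hp1 z]
      nlinarith [mul_nonneg hδ0 hpsi, mul_nonneg hδ0 (hμ z)]
    · rw [if_neg hz, mul_zero, add_zero]
      have h1 := mul_le_mul_of_nonneg_right (hδ z hz) hpsi
      have h2 := mul_le_mul_of_nonneg_right (hδ z hz) (hμ z)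
      have h3 : 0 ≤ p z * (1 / NN n k) := mul_nonneg (hp0 z) (by positivity)
      nlinarith
  have h := Finset.sum_le_sum (fun z (_ : z ∈ univ) => hpt z)
  refine h.trans (le_of_eq ?_)
  rw [Finset.sum_add_distrib, Finset.sum_add_distrib, ← Finset.mul_sum, ← Finset.mul_sum, ← Finset.mul_sum,
    Finset.sum_add_distrib, Finset.sum_sub_distrib, hs, Finset.sum_const, Finset.sum_ite_mem, Finset.univ_inter]
  have : (#(univ : Finset (TState n k))) • (1 / NN n k) = 1 := by
    rw [nsmul_eq_mul]
    show NN n k * (1 / NN n k) = 1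
    field_simp
  rw [this]
  unfold DD; ring

lemma av_scal {ι : Type*} [Fintype ι] [Nonempty ι] {c : ℝ} {F : ι → ℝ} (h : ∀ i, c ≤ F i) : c ≤ av F := by
  rw [← av_const (ι := ι) c]; exact av_mono h

lemma ineq_D {n k q : ℕ} (hq : 2 ≤ q) (μ : TState n k → ℝ) (hμ : ∀ z, 0 ≤ μ z) (hs : ∑ z, μ z = 1)
    (B : Finset (TState n k)) (δ : ℝ) (hδ0 : 0 ≤ δ)
    (hδ : ∀ z, z ∉ B → pz (1 - 1 / (q:ℝ)) z ≤ δ) :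
    DD μ ≤ 2 * (EntTot μ * (1 / q)) + 2 * (2 ^ k * ((1 + (1 - 1 / (q:ℝ))) / 2) ^ n) +
      2 * (δ * DD μ + δ + Real.log (NN n k) * ∑ z ∈ B, μ z) := by
  classical
  have hq0 : 0 < q := by omega
  have hr : (0:ℝ) ≤ 1 - 1 / (q:ℝ) := by
    rw [sub_nonneg, div_le_one (by exact_mod_cast hq0)]; exact_mod_cast hq0
  set i0 : Fin q := ⟨0, by omega⟩
  set i1 : Fin q := ⟨1, by omega⟩
  have hne : i0 ≠ i1 := by simp [i0, i1]
  have : Nonempty (Fin q) := ⟨i0⟩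
  set p : Fin q → TState n k → ℝ := fun i z => av (fun c : Fin n → Fin q => nsp (col i c) z) with hp
  set G : Fin q → (Fin n → Fin q) → ℝ := fun i c => Eset μ (col i c ×ˢ (col i c)ᶜ) + 
    av (fun z : TState n k => nsp (col i c) z) + ∑ z, nsp (col i c) z * (μ z * Real.log (NN n k * μ z)) with hG
  have h1 : ∀ c : Fin n → Fin q, DD μ ≤ G i0 c + G i1 c := by
    intro c
    have a0 := one_set μ hμ (col i0 c)
    have a1 := one_set μ hμ (col i1 c)
    have a2 := superadd μ hμ hs (S := col i0 c) (T := col i1 c) (by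
      rw [Finset.disjoint_left]; intro j h0 h1
      simp only [col, mem_filter, mem_univ, true_and] at h0 h1
      exact hne (h0.symm.trans h1))
    simp only [hG]; linarith
  have h2 := av_scal h1
  rw [av_add] at h2
  have h3 : ∀ i, av (G i) ≤ EntTot μ * (1 / q) + 2 ^ k * ((1 + (1 - 1 / (q:ℝ))) / 2) ^ n +
      (δ * DD μ + δ + Real.log (NN n k) * ∑ z ∈ B, μ z) := by
    intro i
    simp only [hG]
    rw [av_add, av_add]
    have b1 := av_Eset hq0 i μ hμ
    have b2 : av (fun c : Fin n → Fin q => av (fun z : TState n k => nsp (col i c) z)) ≤ 2 ^ k * ((1 + (1 - 1 / (q:ℝ))) / 2) ^ n := by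
      rw [av_comm]
      exact (av_mono (fun z => av_nsp_le hq0 i z)).trans (av_pz _ hr)
    have b3 : av (fun c : Fin n → Fin q => ∑ z, nsp (col i c) z * (μ z * Real.log (NN n k * μ z))) = 
        ∑ z, p i z * (μ z * Real.log (NN n k * μ z)) := by
      rw [av_sum]; simp only [av_mul, hp]
    have b4 := psi_term μ hμ hs (p i) (fun z => av_nonneg (fun c => nsp_nonneg _ z)) (by
      intro z
      rw [← av_const (ι := Fin n → Fin q) 1]
      apply av_mono; intro c; unfold nsp; split_ifs <;> norm_num) B δ hδ0 
      (fun z hz => (av_nsp_le hq0 i z).trans (hδ z hz))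
    rw [b3]
    linarith
  linarith [h3 i0, h3 i1]


def phi (m w : ℕ) : ℝ := if w ≤ m then 1 / (w:ℝ) else 1 / (m:ℝ) * (1/2)^(w-m)

lemma phi_nonneg (m w : ℕ) : 0 ≤ phi m w := by unfold phi; split_ifs <;> positivity

lemma phi_drift {n m w : ℕ} (hm : 20 ≤ m) (hmn : 13 * m ≤ n) (hw : 1 ≤ w) (hwn : w ≤ n) :
    (w:ℝ) * ((n:ℝ) - w) * (phi m (w+1) - phi m w) + (w:ℝ) * ((w:ℝ) - 1) * (phi m (w-1) - phi m w) ≤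
      -((n:ℝ)/4) * phi m w + 2 * ((n:ℝ) * ((n:ℝ) - 1)) * (1/2)^m := by
  have hmR : (20:ℝ) ≤ m := by exact_mod_cast hm
  have hmnR : 13 * (m:ℝ) ≤ n := by exact_mod_cast hmn
  have hwR : (1:ℝ) ≤ w := by exact_mod_cast hw
  have hwnR : (w:ℝ) ≤ n := by exact_mod_cast hwn
  have herr : 0 ≤ 2 * ((n:ℝ) * ((n:ℝ) - 1)) * (1/2)^m := by
    have : (0:ℝ) ≤ (n:ℝ) - 1 := by linarith
    positivity
  rcases lt_trichotomy w m with h | h | h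
  · have hwm : (w:ℝ) + 1 ≤ m := by exact_mod_cast h
    have e0 : phi m w = 1 / w := by unfold phi; rw [if_pos h.le]
    have e1 : phi m (w+1) = 1 / ((w:ℝ)+1) := by unfold phi; rw [if_pos (show w + 1 ≤ m from h)]; push_cast; rfl
    have e2 : (w:ℝ) * ((w:ℝ) - 1) * (phi m (w-1) - phi m w) ≤ 1 := by
      by_cases h1 : w = 1
      · subst h1; norm_num
      · have h2 : (2:ℝ) ≤ w := by exact_mod_cast (show 2 ≤ w by omega)
        have e : phi m (w-1) = 1 / ((w:ℝ)-1) := by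
          unfold phi; rw [if_pos (by omega), Nat.cast_sub hw]; norm_num
        rw [e, e0]
        have : (w:ℝ) - 1 ≠ 0 := by linarith
        have h0 : (w:ℝ) ≠ 0 := by linarith
        apply le_of_eq; field_simp; ring
    have e3 : (w:ℝ) * ((n:ℝ) - w) * (phi m (w+1) - phi m w) = -(((n:ℝ) - w) / (w+1)) := by
      rw [e0, e1]; field_simp; ring
    have e4 : ((n:ℝ) - w) / (2 * w) ≤ ((n:ℝ) - w) / (w+1) := by
      apply div_le_div_of_nonneg_left <;> linarith
    have e5 : 1 + (n:ℝ)/4 * (1 / w) ≤ ((n:ℝ) - w) / (2 * w) := by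
      have h0 : (w:ℝ) ≠ 0 := by linarith
      rw [le_div_iff₀ (by linarith)]
      have : (1 + (n:ℝ)/4 * (1 / w)) * (2 * w) = 2 * w + n / 2 := by field_simp; ring
      rw [this]; linarith
    rw [e0] at e2 ⊢
    rw [e0] at e3
    linarith
  · subst h
    have e0 : phi w w = 1 / w := by unfold phi; rw [if_pos le_rfl]
    have e1 : phi w (w+1) = 1 / (2 * (w:ℝ)) := by
      unfold phi; rw [if_neg (by omega)]
      simp
    have e2 : phi w (w-1) = 1 / ((w:ℝ)-1) := by
          unfold phi; rw [if_pos (by omega), Nat.cast_sub hw]; norm_num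
    have h0 : (w:ℝ) ≠ 0 := by linarith
    have h1 : (w:ℝ) - 1 ≠ 0 := by linarith
    have e3 : (w:ℝ) * ((n:ℝ) - w) * (phi w (w+1) - phi w w) = -((n:ℝ) - w) / 2 := by
      rw [e0, e1]; field_simp; ring
    have e4 : (w:ℝ) * ((w:ℝ) - 1) * (phi w (w-1) - phi w w) = 1 := by
      rw [e0, e2]; field_simp; ring
    rw [e3, e4, e0]
    have : (n:ℝ)/4 * (1/w) ≤ n/4 * (1/20) := by gcongr
    linarith
  · have e0 : phi m w = 1 / (m:ℝ) * (1/2)^(w-m) := by unfold phi; rw [if_neg (by omega)]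
    have e1 : phi m (w+1) = phi m w / 2 := by
      rw [e0]; unfold phi; rw [if_neg (by omega), show w + 1 - m = (w - m) + 1 by omega, pow_succ]; ring
    have e2 : phi m (w-1) = 2 * phi m w := by
      rw [e0, show w - m = (w - 1 - m) + 1 by omega, pow_succ]
      unfold phi
      split_ifs with hc
      · have : w - 1 = m := by omega
        rw [this]; simp; ring
      · ring
    have hx := phi_nonneg m w
    rw [e1, e2]
    set x := phi m w
    by_cases h2 : w ≤ 2 * m
    · have h2R : (w:ℝ) ≤ 2 * m := by exact_mod_cast h2
      have key : (n:ℝ)/4 ≤ (w:ℝ) * ((n:ℝ)/2 + 1 - 1.5 * w) := by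
        have : (n:ℝ)/4 ≤ ((n:ℝ)/2 + 1 - 1.5 * w) := by linarith
        nlinarith
      nlinarith [mul_le_mul_of_nonneg_right key hx]
    · have hx2 : x ≤ (1/2)^m := by
        rw [e0]
        have a1 : (1:ℝ)/m ≤ 1 := by rw [div_le_one (by linarith)]; linarith
        have a2 : ((1:ℝ)/2)^(w-m) ≤ (1/2)^m := pow_le_pow_of_le_one (by norm_num) (by norm_num) (by omega)
        calc (1:ℝ)/m * (1/2)^(w-m) ≤ 1 * (1/2)^m := by gcongr
          _ = _ := one_mul _
      have c1 : (w:ℝ) * ((w:ℝ) - 1) * x ≤ (n:ℝ) * ((n:ℝ) - 1) * x := by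
        apply mul_le_mul_of_nonneg_right _ hx
        nlinarith
      have c2 : (n:ℝ)/4 * x ≤ (n:ℝ) * ((n:ℝ) - 1) * x := by
        apply mul_le_mul_of_nonneg_right _ hx
        nlinarith
      have c3 : (n:ℝ) * ((n:ℝ) - 1) * x ≤ (n:ℝ) * ((n:ℝ) - 1) * (1/2)^m := by
        apply mul_le_mul_of_nonneg_left hx2
        nlinarith
      have c4 : 0 ≤ (w:ℝ) * ((n:ℝ) - w) * x := by
        have : 0 ≤ (n:ℝ) - w := by linarith
        positivity
      nlinarith

lemma dt_sg {n k : ℕ} (l : Fin k → ZMod 2) (a b : Fin n) (z : TState n k) (j : Fin n) :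
    dt l (sg a b z j) = if j = b then dt l (z b) + dt l (z a) else dt l (z j) := by
  unfold sg
  by_cases h : j = b
  · subst h; simp [dt_add]
  · simp [h]

lemma wt_sg {n k : ℕ} (l : Fin k → ZMod 2) {a b : Fin n} (z : TState n k) (m : ℕ) :
    phi m (wt l (sg a b z)) = phi m (wt l z) +
      ((if dt l (z a) ≠ 0 then (1:ℝ) else 0) * (if dt l (z b) ≠ 0 then (0:ℝ) else 1) * (phi m (wt l z + 1) - phi m (wt l z))
      + (if dt l (z a) ≠ 0 then (1:ℝ) else 0) * (if dt l (z b) ≠ 0 then (1:ℝ) else 0) * (phi m (wt l z - 1) - phi m (wt l z))) := by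
  by_cases ha : dt l (z a) = 0
  · have : wt l (sg a b z) = wt l z := by
      unfold wt; congr 1; ext j
      simp only [mem_filter, mem_univ, true_and, dt_sg, ha, add_zero]
      split_ifs with h
      · rw [h]
      · rfl
    rw [this]; simp [ha]
  · have ha1 : dt l (z a) = 1 := (zmod2_cases _).resolve_left ha
    have h11 : (1 + 1 : ZMod 2) = 0 := by decide
    by_cases hb : dt l (z b) = 0
    · have : wt l (sg a b z) = wt l z + 1 := by
        unfold wt
        rw [← Finset.card_insert_of_notMem (a := b) (by simp [hb])]
        congr 1; ext j
        simp only [mem_filter, mem_univ, true_and, dt_sg, ha1, hb, mem_insert]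
        by_cases h : j = b <;> simp [h]
      rw [this]; simp [ha, hb]
    · have hb1 : dt l (z b) = 1 := (zmod2_cases _).resolve_left hb
      have : wt l (sg a b z) = wt l z - 1 := by
        unfold wt
        rw [← Finset.card_erase_of_mem (a := b) (by simp [hb])]
        congr 1; ext j
        simp only [mem_filter, mem_univ, true_and, dt_sg, ha1, hb1, mem_erase, h11]
        by_cases h : j = b <;> simp [h]
      rw [this]; simp [ha, hb]

lemma wt_sum {n k : ℕ} (l : Fin k → ZMod 2) (z : TState n k) :
    ∑ j, (if dt l (z j) ≠ 0 then (1:ℝ) else 0) = wt l z := by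
  rw [Finset.sum_boole]; rfl

lemma wt_sum' {n k : ℕ} (l : Fin k → ZMod 2) (z : TState n k) :
    ∑ j, (if dt l (z j) ≠ 0 then (0:ℝ) else 1) = (n:ℝ) - wt l z := by
  rw [← wt_sum, eq_sub_iff_add_eq, ← Finset.sum_add_distrib]
  rw [Finset.sum_congr rfl (g := fun _ => (1:ℝ))]
  · simp
  · intro j _; split_ifs <;> norm_num

lemma wt_offDiag {n k : ℕ} (l : Fin k → ZMod 2) (z : TState n k) (m : ℕ) :
    ∑ p ∈ (univ : Finset (Fin n)).offDiag, phi m (wt l (sg p.1 p.2 z)) =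
      (n:ℝ) * ((n:ℝ) - 1) * phi m (wt l z) + ((wt l z:ℝ) * ((n:ℝ) - wt l z) * (phi m (wt l z+1) - phi m (wt l z)) + (wt l z:ℝ) * ((wt l z:ℝ) - 1) * (phi m (wt l z-1) - phi m (wt l z))) := by
  set u := phi m (wt l z+1) - phi m (wt l z)
  set v := phi m (wt l z-1) - phi m (wt l z)
  simp only [wt_sg]
  rw [Finset.sum_add_distrib, Finset.sum_const, nsmul_eq_mul, card_offDiag]
  congr 1
  rw [offDiag_sum (fun a b => (if dt l (z a) ≠ 0 then (1:ℝ) else 0) * (if dt l (z b) ≠ 0 then (0:ℝ) else 1) * u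
      + (if dt l (z a) ≠ 0 then (1:ℝ) else 0) * (if dt l (z b) ≠ 0 then (1:ℝ) else 0) * v)]
  have e : ∀ a b : Fin n, (if a ≠ b then (if dt l (z a) ≠ 0 then (1:ℝ) else 0) * (if dt l (z b) ≠ 0 then (0:ℝ) else 1) * u
      + (if dt l (z a) ≠ 0 then (1:ℝ) else 0) * (if dt l (z b) ≠ 0 then (1:ℝ) else 0) * v else 0) =
      (if dt l (z a) ≠ 0 then (1:ℝ) else 0) * (if dt l (z b) ≠ 0 then (0:ℝ) else 1) * u
      + (if dt l (z a) ≠ 0 then (1:ℝ) else 0) * (if dt l (z b) ≠ 0 then (1:ℝ) else 0) * v - 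
      (if b = a then (if dt l (z b) ≠ 0 then (1:ℝ) else 0) * v else 0) := by
    intro a b
    by_cases hab : a = b
    · subst hab; by_cases h : dt l (z a) = 0 <;> simp [h]
    · simp [hab, Ne.symm hab]
  simp only [e, Finset.sum_sub_distrib, Finset.sum_add_distrib, ← Finset.sum_mul, ← Finset.mul_sum, wt_sum, wt_sum', 
    Finset.sum_ite_eq', Finset.mem_univ, if_true]
  ring

def Phi {n k : ℕ} (m : ℕ) (z : TState n k) : ℝ := ∑ l ∈ univ.erase (0 : Fin k → ZMod 2), phi m (wt l z)

lemma wt_pos {n k : ℕ} {z : TState n k} (hz : z ∈ Stief n k) (l) (hl : l ≠ 0) : 1 ≤ wt l z := by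
  obtain ⟨i, hi⟩ := (stief_iff z).1 hz l hl
  exact Finset.card_pos.2 ⟨i, by simpa using hi⟩

lemma wt_le {n k : ℕ} (z : TState n k) (l) : wt l z ≤ n := by
  refine (Finset.card_le_univ _).trans (by simp)

lemma card_erase_le (k : ℕ) : ((#(univ.erase (0 : Fin k → ZMod 2)) : ℕ) : ℝ) ≤ 2 ^ k := by
  have : #(univ.erase (0 : Fin k → ZMod 2)) ≤ 2 ^ k := by
    refine (Finset.card_le_univ _).trans ?_
    simp
  exact_mod_cast this

lemma Phi_drift {n k m : ℕ} (hm : 20 ≤ m) (hmn : 13 * m ≤ n) {z : TState n k} (hz : z ∈ Stief n k) :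
    (Phi m z + (∑ p ∈ (univ : Finset (Fin n)).offDiag, Phi m (sg p.1 p.2 z)) / ((n:ℝ) * ((n:ℝ) - 1))) / 2 ≤
      (1 - 1 / (8 * (n:ℝ))) * Phi m z + 2 ^ k * (1/2)^m := by
  have hnR : (260:ℝ) ≤ n := by exact_mod_cast (show 260 ≤ n by omega)
  have hM : 0 < (n:ℝ) * ((n:ℝ) - 1) := by nlinarith
  have h1 : ∀ l ∈ univ.erase (0 : Fin k → ZMod 2), 
      (phi m (wt l z) + (∑ p ∈ (univ : Finset (Fin n)).offDiag, phi m (wt l (sg p.1 p.2 z))) / ((n:ℝ) * ((n:ℝ) - 1))) / 2 ≤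
      (1 - 1 / (8 * (n:ℝ))) * phi m (wt l z) + (1/2)^m := by
    intro l hl
    have hd := phi_drift hm hmn (wt_pos hz l (Finset.mem_erase.1 hl).1) (wt_le z l)
    rw [wt_offDiag]
    have hx := phi_nonneg m (wt l z)
    set x := phi m (wt l z)
    have : ((n:ℝ) * ((n:ℝ) - 1) * x + ((wt l z:ℝ) * ((n:ℝ) - wt l z) * (phi m (wt l z+1) - x) + (wt l z:ℝ) * ((wt l z:ℝ) - 1) * (phi m (wt l z-1) - x))) / ((n:ℝ) * ((n:ℝ) - 1)) ≤ x - x / (4 * n) + 2 * (1/2)^m := by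
      rw [div_le_iff₀ hM]
      have e : (x - x / (4 * n) + 2 * (1/2)^m) * ((n:ℝ) * ((n:ℝ) - 1)) = (n:ℝ) * ((n:ℝ) - 1) * x - ((n:ℝ) - 1)/4 * x + 2 * ((n:ℝ) * ((n:ℝ) - 1)) * (1/2)^m := by
        field_simp
      rw [e]; nlinarith
    have e2 : (1 - 1 / (8 * (n:ℝ))) * x = x - x / (4 * n) / 2 := by field_simp; ring
    rw [e2]; linarith
  have h2 := Finset.sum_le_sum h1
  rw [← Finset.sum_div, Finset.sum_add_distrib, ← Finset.sum_div, Finset.sum_comm, Finset.sum_add_distrib, ← Finset.mul_sum,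
    Finset.sum_const, nsmul_eq_mul] at h2
  refine h2.trans ?_
  unfold Phi
  have := mul_le_mul_of_nonneg_right (card_erase_le k) (show (0:ℝ) ≤ (1/2)^m by positivity)
  linarith

lemma Phi_step {n k m : ℕ} (hm : 20 ≤ m) (hmn : 13 * m ≤ n) (μ : TState n k → ℝ) (hμ : ∀ z, 0 ≤ μ z) (hs : ∑ z, μ z = 1)
    (hS : ∀ z, μ z ≠ 0 → z ∈ Stief n k) :
    ∑ z, stepf μ z * Phi m z ≤ (1 - 1 / (8 * (n:ℝ))) * ∑ z, μ z * Phi m z + 2 ^ k * (1/2)^m := by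
  rw [step_expect, Finset.sum_comm]
  calc _ = ∑ z, μ z * ((Phi m z + (∑ p ∈ (univ : Finset (Fin n)).offDiag, Phi m (sg p.1 p.2 z)) / ((n:ℝ) * ((n:ℝ) - 1))) / 2) := by
        rw [Finset.sum_div, ← Finset.sum_add_distrib, Finset.sum_div]
        apply Finset.sum_congr rfl; intro z _
        rw [← Finset.mul_sum]; ring
    _ ≤ ∑ z, μ z * ((1 - 1 / (8 * (n:ℝ))) * Phi m z + 2 ^ k * (1/2)^m) := by
        apply Finset.sum_le_sum; intro z _
        by_cases h : μ z = 0
        · simp [h]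
        · exact mul_le_mul_of_nonneg_left (Phi_drift hm hmn (hS z h)) (hμ z)
    _ = _ := by
        simp only [mul_add, Finset.sum_add_distrib, ← Finset.sum_mul, hs]
        rw [Finset.mul_sum]
        congr 1
        · apply Finset.sum_congr rfl; intro z _; ring
        · ring

lemma Phi_bound {n k m : ℕ} (hm : 20 ≤ m) (hmn : 13 * m ≤ n) {x : TState n k} (hx : x ∈ Stief n k) (t : ℕ) :
    ∑ z, (transQ n k ^ t) x z * Phi m z ≤ 8 * n * (2 ^ k * (1/2)^m) + 2 ^ k * Real.exp (-(t / (8 * (n:ℝ)))) := by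
  have hn2 : 2 ≤ n := by omega
  have hnR : (260:ℝ) ≤ n := by exact_mod_cast (show 260 ≤ n by omega)
  set e := 8 * n * ((2:ℝ) ^ k * (1/2)^m) with he
  have he0 : 0 ≤ e := by positivity
  set r := 1 / (8 * (n:ℝ)) with hr
  have hr1 : r ≤ 1 := by rw [hr, div_le_one (by linarith)]; linarith
  have hre : r * e = 2 ^ k * (1/2)^m := by rw [hr, he]; field_simp
  have h := contract_iter (fun t => ∑ z, (transQ n k ^ t) x z * Phi m z) r e hr1 (by
    intro t
    rw [Qpow_succ]
    have := Phi_step hm hmn _ (Qpow_nonneg hn2 t x) (Qpow_sum hn2 t x) (Qpow_stief t hx)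
    rw [← hr] at this
    linarith) t
  have h0 : ∑ z, (transQ n k ^ 0) x z * Phi m z ≤ 2 ^ k := by
    have : ∑ z, (transQ n k ^ 0) x z * Phi m z = Phi m x := by
      simp [Matrix.one_apply]
    rw [this]
    unfold Phi
    calc _ ≤ ∑ l ∈ univ.erase (0 : Fin k → ZMod 2), (1:ℝ) := by
          apply Finset.sum_le_sum; intro l hl
          have hw := wt_pos hx l (Finset.mem_erase.1 hl).1
          have hw' : (1:ℝ) ≤ wt l x := by exact_mod_cast hw
          unfold phi
          split_ifs
          · rw [div_le_one (by linarith)]; exact hw'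
          · have a1 : (1:ℝ)/m ≤ 1 := by rw [div_le_one (by exact_mod_cast (show 0 < m by omega))]; exact_mod_cast (show 1 ≤ m by omega)
            have a2 : ((1:ℝ)/2)^(wt l x-m) ≤ 1 := pow_le_one₀ (by norm_num) (by norm_num)
            have a3 : (0:ℝ) ≤ (1/2)^(wt l x-m) := by positivity
            have a4 : (0:ℝ) ≤ 1 / m := by positivity
            nlinarith
      _ ≤ 2 ^ k := by rw [Finset.sum_const, nsmul_eq_mul, mul_one]; exact card_erase_le k
  have hp := exp_bound (r := r) (by linarith) t
  have hp0 : 0 ≤ (1 - r)^t := pow_nonneg (by linarith) t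
  have e1 : r * t = t / (8 * (n:ℝ)) := by rw [hr]; ring
  rw [e1] at hp
  have h3 : (1 - r)^t * (∑ z, (transQ n k ^ 0) x z * Phi m z - e) ≤ 2 ^ k * Real.exp (-(t / (8 * (n:ℝ)))) := by
    calc _ ≤ (1 - r)^t * 2 ^ k := by apply mul_le_mul_of_nonneg_left _ hp0; linarith
      _ ≤ _ := by rw [mul_comm]; gcongr
  linarith

open Classical in
def Bad {n k : ℕ} (m : ℕ) : Finset (TState n k) := (SF n k).filter (fun z => ∃ l ≠ 0, wt l z ≤ m)

lemma bad_bound {n k m : ℕ} (hm : 1 ≤ m) (μ : TState n k → ℝ) (hμ : ∀ z, 0 ≤ μ z) :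
    ∑ z ∈ Bad m, μ z ≤ m * ∑ z, μ z * Phi m z := by
  rw [Finset.mul_sum]
  have hmR : (1:ℝ) ≤ m := by exact_mod_cast hm
  have hP : ∀ z : TState n k, 0 ≤ Phi m z := fun z => Finset.sum_nonneg (fun l _ => phi_nonneg m _)
  calc _ ≤ ∑ z ∈ Bad m, m * (μ z * Phi m z) := by
        apply Finset.sum_le_sum; intro z hz
        unfold Bad at hz
        obtain ⟨hz1, l, hl, hw⟩ := Finset.mem_filter.1 hz
        have h1 : phi m (wt l z) ≤ Phi m z :=
          Finset.single_le_sum (f := fun l => phi m (wt l z)) (fun l _ => phi_nonneg m _) (Finset.mem_erase.2 ⟨hl, mem_univ l⟩)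
        have hwp := wt_pos (mem_SF.1 hz1) l hl
        have hwp' : (1:ℝ) ≤ wt l z := by exact_mod_cast hwp
        have h2 : 1 / (m:ℝ) ≤ phi m (wt l z) := by
          unfold phi; rw [if_pos hw]
          apply div_le_div_of_nonneg_left (by norm_num) (by linarith)
          exact_mod_cast hw
        have h3 : 1 ≤ m * Phi m z := by
          have := mul_le_mul_of_nonneg_left (h2.trans h1) (show (0:ℝ) ≤ m by linarith)
          rwa [mul_one_div_cancel (by linarith)] at this
        nlinarith [hμ z]
    _ ≤ _ := Finset.sum_le_sum_of_subset_of_nonneg (subset_univ _)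
        (fun z _ _ => mul_nonneg (by linarith) (mul_nonneg (hμ z) (hP z)))


lemma DD_nonneg {n k : ℕ} (μ : TState n k → ℝ) (hμ : ∀ z, 0 ≤ μ z) (hs : ∑ z, μ z = 1) : 0 ≤ DD μ := by
  have := superadd μ hμ hs (S := ∅) (T := ∅) (by simp)
  simpa [FS_empty, hs] using this

lemma pz_good {n k m : ℕ} (r : ℝ) (h0 : 0 ≤ r) (h1 : r ≤ 1) {z : TState n k} (hz : z ∈ Stief n k) (hb : z ∉ Bad m) :
    pz r z ≤ 2 ^ k * r ^ m := by
  unfold pz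
  calc _ ≤ ∑ l ∈ univ.erase (0 : Fin k → ZMod 2), r ^ m := by
        apply Finset.sum_le_sum; intro l hl
        apply pow_le_pow_of_le_one h0 h1
        by_contra hc
        apply hb
        unfold Bad
        rw [Finset.mem_filter]
        exact ⟨mem_SF.2 hz, l, (Finset.mem_erase.1 hl).1, by omega⟩
    _ ≤ _ := by
        rw [Finset.sum_const, nsmul_eq_mul]
        exact mul_le_mul_of_nonneg_right (card_erase_le k) (by positivity)

lemma two_pow_le_exp (k : ℕ) : (2:ℝ) ^ k ≤ Real.exp k := by
  have h : (2:ℝ) ≤ Real.exp 1 := by have := Real.exp_one_gt_d9; linarith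
  calc (2:ℝ) ^ k ≤ (Real.exp 1) ^ k := by gcongr
    _ = Real.exp k := by rw [← Real.exp_nat_mul, mul_one]

lemma small_delta {k : ℕ} (hk : 1 ≤ k) : (2:ℝ) ^ k * Real.exp (-(10 * k)) ≤ 1/2048 := by
  have hkR : (1:ℝ) ≤ k := by exact_mod_cast hk
  calc (2:ℝ) ^ k * Real.exp (-(10 * k)) ≤ Real.exp k * Real.exp (-(10 * k)) := by gcongr; exact two_pow_le_exp k
    _ = Real.exp (k - 10 * k) := by rw [← Real.exp_add]; ring_nf
    _ ≤ Real.exp (-9) := by apply Real.exp_le_exp.2; linarith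
    _ ≤ 1/2048 := by
      rw [Real.exp_neg, inv_le_comm₀ (Real.exp_pos _) (by norm_num)]
      have h := Real.exp_one_gt_d9
      have e : Real.exp 9 = (Real.exp 1)^9 := by rw [← Real.exp_nat_mul]; norm_num
      rw [e]
      calc ((1:ℝ)/2048)⁻¹ ≤ (2.7:ℝ)^9 := by norm_num
        _ ≤ _ := by gcongr; linarith

lemma D_contract {n k q : ℕ} (hk : 1 ≤ k) (hq : 2 ≤ q) (hn : 130 * k * q ≤ n) (μ : TState n k → ℝ) (hμ : ∀ z, 0 ≤ μ z)
    (hs : ∑ z, μ z = 1) (hS : ∀ z, μ z ≠ 0 → z ∈ Stief n k)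
    (hbad : 4 * (Real.log (NN n k) * ∑ z ∈ Bad (10 * k * q), μ z) ≤ 1/256) :
    DD μ ≤ 4 * (EntTot μ * (1 / q)) + 1/128 := by
  classical
  have hkR : (1:ℝ) ≤ k := by exact_mod_cast hk
  have hqR : (2:ℝ) ≤ q := by exact_mod_cast hq
  have hq0 : (0:ℝ) < q := by linarith
  have hqi : 1 / (q:ℝ) ≤ 1 := by rw [div_le_one hq0]; linarith
  have hnR : 130 * (k:ℝ) * q ≤ n := by exact_mod_cast hn
  set δ := (2:ℝ) ^ k * Real.exp (-(10 * k)) with hδ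
  have hδ0 : 0 ≤ δ := by positivity
  have hδs : δ ≤ 1/2048 := small_delta hk
  have hr0 : 0 ≤ 1 - 1 / (q:ℝ) := by linarith
  have hr1 : 1 - 1 / (q:ℝ) ≤ 1 := by have : 0 ≤ 1 / (q:ℝ) := by positivity
                                     linarith
  have hgood : ∀ z : TState n k, z ∉ Bad (10 * k * q) ∪ (SF n k)ᶜ → pz (1 - 1 / (q:ℝ)) z ≤ δ := by
    intro z hz
    simp only [mem_union, not_or, mem_compl, not_not] at hz
    refine (pz_good _ hr0 hr1 (mem_SF.1 hz.2) hz.1).trans ?_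
    rw [hδ]
    apply mul_le_mul_of_nonneg_left _ (by positivity)
    refine (exp_bound hr0 _).trans (le_of_eq ?_)
    congr 2; push_cast; field_simp
  have h := ineq_D hq μ hμ hs (Bad (10 * k * q) ∪ (SF n k)ᶜ) δ hδ0 hgood
  have hB : ∑ z ∈ Bad (10 * k * q) ∪ (SF n k)ᶜ, μ z = ∑ z ∈ Bad (10 * k * q), μ z := by
    symm
    apply Finset.sum_subset Finset.subset_union_left
    intro z hz hz2
    by_contra hne
    rcases Finset.mem_union.1 hz with h1 | h1
    · exact hz2 h1
    · exact (Finset.mem_compl.1 h1) (mem_SF.2 (hS z hne))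
  rw [hB] at h
  have hρ : (2:ℝ) ^ k * ((1 + (1 - 1 / (q:ℝ))) / 2) ^ n ≤ δ := by
    rw [hδ]
    apply mul_le_mul_of_nonneg_left _ (by positivity)
    have e : (1 + (1 - 1 / (q:ℝ))) / 2 = 1 - 1 / (2 * q) := by field_simp; ring
    rw [e]
    have h5 : 1 / (2 * (q:ℝ)) ≤ 1 := by rw [div_le_one (by linarith)]; linarith
    refine (exp_bound (by linarith) _).trans ?_
    apply Real.exp_le_exp.2
    rw [neg_le_neg_iff, div_mul_eq_mul_div, one_mul, le_div_iff₀ (by linarith)]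
    nlinarith [mul_nonneg (show (0:ℝ) ≤ k by linarith) hq0.le]
  have hD := DD_nonneg μ hμ hs
  have hDδ := mul_le_mul_of_nonneg_right hδs hD
  linarith

lemma tv_tri {X : Type*} [Fintype X] (f g h : X → ℝ) : tvDist f h ≤ tvDist f g + tvDist g h := by
  unfold tvDist
  rw [← mul_add, ← Finset.sum_add_distrib]
  apply mul_le_mul_of_nonneg_left _ (by norm_num)
  exact Finset.sum_le_sum (fun x _ => abs_sub_le _ _ _)

lemma stief_spans {n k : ℕ} (z : TState n k) : spansS univ z ↔ z ∈ Stief n k := by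
  rw [stief_iff]; simp [spansS]

lemma nsp_univ {n k : ℕ} (z : TState n k) : nsp univ z ≤ pz 0 z := by
  have h := av_nsp_le (n := n) (q := 1) (by norm_num) (0 : Fin 1) z
  have e : ∀ c : Fin n → Fin 1, col 0 c = univ := by
    intro c; unfold col; ext j; simp [Subsingleton.elim (c j) 0]
  simp only [e] at h
  rw [av_const] at h
  simpa using h

lemma tv_unif {n k : ℕ} (h : k + 4 ≤ n) :
    tvDist (fun z : TState n k => if z ∈ (univ : Finset (TState n k)) then ((univ : Finset (TState n k)).card : ℝ)⁻¹ else 0) (uF n k) ≤ 1/16 := by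
  classical
  have hN := NN_pos n k
  have h1 : av (fun z : TState n k => nsp univ z) ≤ 1/16 := by
    refine (av_mono nsp_univ).trans ((av_pz 0 le_rfl).trans ?_)
    obtain ⟨j, rfl⟩ := Nat.exists_eq_add_of_le h
    have e : (2:ℝ)^k * ((1 + 0)/2)^(k+4+j) = 1/16 * (1/2)^j := by
      rw [pow_add, pow_add, add_zero, ← mul_assoc, ← mul_assoc, ← mul_pow]; norm_num
    rw [e]
    have : ((1:ℝ)/2)^j ≤ 1 := pow_le_one₀ (by norm_num) (by norm_num)
    linarith
  set s : ℝ := (#(SF n k) : ℝ) with hs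
  have h2 : av (fun z : TState n k => nsp univ z) = 1 - s / NN n k := by
    have e : ∀ z : TState n k, nsp univ z = 1 + (if z ∈ SF n k then (1:ℝ) else 0) * (-1) := by
      intro z; unfold nsp
      by_cases hz : z ∈ Stief n k
      · rw [if_pos ((stief_spans z).2 hz), if_pos (mem_SF.2 hz)]; norm_num
      · rw [if_neg (fun h => hz ((stief_spans z).1 h)), if_neg (fun h => hz (mem_SF.1 h))]; norm_num
    simp only [e]
    rw [av_add, av_mul, av_const]
    unfold av
    simp only [Finset.sum_ite_mem, Finset.univ_inter, Finset.sum_const, nsmul_eq_mul, mul_one]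
    show 1 + s / NN n k * (-1) = _
    ring
  rw [h2] at h1
  have hsN : s ≤ NN n k := by rw [hs]; unfold NN; exact_mod_cast Finset.card_le_univ _
  have hs0 : 0 < s := by
    by_contra hc
    have : s = 0 := le_antisymm (not_lt.1 hc) (by positivity)
    rw [this] at h1; norm_num at h1
  unfold tvDist
  have e : ∀ z : TState n k, |(if z ∈ (univ : Finset (TState n k)) then ((univ : Finset (TState n k)).card : ℝ)⁻¹ else 0) - uF n k z| =
      (NN n k)⁻¹ + (if z ∈ SF n k then (s⁻¹ - 2 * (NN n k)⁻¹) else 0) := by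
    intro z
    rw [if_pos (mem_univ z), uF_def]
    show |(NN n k)⁻¹ - _| = _
    split_ifs
    · have : (NN n k)⁻¹ ≤ s⁻¹ := inv_anti₀ hs0 hsN
      rw [abs_of_nonpos (by linarith)]; ring
    · rw [sub_zero, add_zero, abs_of_pos (by positivity)]
  rw [Finset.sum_congr rfl (fun z _ => e z), Finset.sum_add_distrib, Finset.sum_ite_mem, Finset.univ_inter, Finset.sum_const,
    Finset.sum_const, nsmul_eq_mul, nsmul_eq_mul]
  show 1/2 * (NN n k * (NN n k)⁻¹ + s * (s⁻¹ - 2 * (NN n k)⁻¹)) ≤ 1/16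
  have : 1/2 * (NN n k * (NN n k)⁻¹ + s * (s⁻¹ - 2 * (NN n k)⁻¹)) = 1 - s / NN n k := by field_simp; ring
  rw [this]; exact h1

lemma log_NN (n k : ℕ) : Real.log (NN n k) ≤ (n:ℝ) * k := by
  have : NN n k = (2:ℝ)^(k * n) := by
    unfold NN
    rw [Fintype.card_fun, Fintype.card_fun, ZMod.card, Fintype.card_fin, Fintype.card_fin, ← pow_mul]; push_cast; rfl
  rw [this, Real.log_pow]
  have l2 : Real.log 2 ≤ 1 := by have := Real.log_two_lt_d9; linarith
  push_cast
  nlinarith [mul_le_mul_of_nonneg_left l2 (show (0:ℝ) ≤ k*n by positivity)]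

lemma part1 {n k q : ℕ} (hk : 1 ≤ k) (hq : 2 ≤ q) (hn : 130 * k * q ≤ n) {x : TState n k} (hx : x ∈ Stief n k)
    (t0 t1 : ℕ)
    (h0 : ∀ t, t0 ≤ t → 4 * (Real.log (NN n k) * ∑ z ∈ Bad (10 * k * q), (transQ n k ^ t) x z) ≤ 1/256)
    (h1 : (n:ℝ)^2 * Real.exp (-(q * t1 / (4 * (n:ℝ)^2))) ≤ 1/128) :
    tvDist ((transQ n k ^ (t0 + t1)) x) (uF n k) ≤ 1/4 := by
  classical
  have hkq : 2 ≤ k * q := by nlinarith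
  have hkn : k ≤ k * q := Nat.le_mul_of_pos_right k (by omega)
  have hqn : q ≤ k * q := Nat.le_mul_of_pos_left q (by omega)
  have hn' : 130 * (k * q) ≤ n := by rw [← mul_assoc]; exact hn
  have hn2 : 2 ≤ n := by omega
  have hk4 : k + 4 ≤ n := by omega
  have hqn' : q ≤ n := by omega
  have hnR : (260:ℝ) ≤ n := by exact_mod_cast (show 260 ≤ n by omega)
  have hqR : (2:ℝ) ≤ q := by exact_mod_cast hq
  have hqnR : (q:ℝ) ≤ n := by exact_mod_cast hqn'
  have hknR : (k:ℝ) ≤ n := by exact_mod_cast (show k ≤ n by omega)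
  set M := (n:ℝ) * ((n:ℝ) - 1) with hM
  have hM0 : 0 < M := by rw [hM]; nlinarith
  have hMn : M ≤ (n:ℝ)^2 := by rw [hM]; nlinarith
  set r := (q:ℝ) / (4 * M) with hr
  have hr0 : 0 ≤ r := by positivity
  have hr1 : r ≤ 1 := by rw [hr, div_le_one (by positivity), hM]; nlinarith
  set D : ℕ → ℝ := fun t => DD ((transQ n k ^ (t0 + t)) x) with hD
  have hDe : ∀ t, DD ((transQ n k ^ t) x) = HH ((transQ n k ^ t) x) + Real.log (NN n k) := fun t => DD_eq _ (Qpow_sum hn2 t x)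
  have hcontr : ∀ t, D (t+1) ≤ D t - r * (D t - 1/128) := by
    intro t
    have a1 := ent_step hn2 ((transQ n k ^ (t0+t)) x) (Qpow_nonneg hn2 _ x)
    have a2 := D_contract hk hq hn ((transQ n k ^ (t0+t)) x) (Qpow_nonneg hn2 _ x) (Qpow_sum hn2 _ x) (Qpow_stief _ hx)
      (h0 _ (by omega))
    rw [← Qpow_succ, ← hM] at a1
    have a3 : r * (DD ((transQ n k ^ (t0+t)) x) - 1/128) ≤ EntTot ((transQ n k ^ (t0+t)) x) / M := by
      calc r * (DD ((transQ n k ^ (t0+t)) x) - 1/128) ≤ r * (4 * (EntTot ((transQ n k ^ (t0+t)) x) * (1 / q))) := by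
            apply mul_le_mul_of_nonneg_left _ hr0; linarith
        _ = _ := by rw [hr]; field_simp
    have a4 := hDe (t0 + t)
    have a5 := hDe (t0 + t + 1)
    simp only [hD, ← add_assoc]
    linarith
  have hmono : ∀ t, HH ((transQ n k ^ t) x) ≤ 0 := by
    intro t
    induction t with
    | zero => rw [HH_zero]
    | succ t ih =>
      have a1 := ent_step hn2 ((transQ n k ^ t) x) (Qpow_nonneg hn2 _ x)
      rw [← Qpow_succ, ← hM] at a1
      have a2 : 0 ≤ EntTot ((transQ n k ^ t) x) := Finset.sum_nonneg (fun p _ => ent1_nonneg _ _ (Qpow_nonneg hn2 _ x))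
      have : 0 ≤ EntTot ((transQ n k ^ t) x) / M := by positivity
      linarith
  have hD0 : D 0 ≤ (n:ℝ)^2 := by
    simp only [hD, hDe]
    have := hmono (t0 + 0)
    have b := log_NN n k
    nlinarith
  have hit := contract_iter D r (1/128) hr1 hcontr t1
  have hpow : (1 - r)^t1 ≤ Real.exp (-(q * t1 / (4 * (n:ℝ)^2))) := by
    refine (exp_bound (by linarith) t1).trans ?_
    apply Real.exp_le_exp.2
    rw [neg_le_neg_iff, hr, div_mul_eq_mul_div]
    apply div_le_div_of_nonneg_left (by positivity) (by positivity)
    linarith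
  have hp0 : 0 ≤ (1 - r)^t1 := pow_nonneg (by linarith) _
  have hfin : D t1 ≤ 1/64 := by
    have : (1 - r)^t1 * (D 0 - 1/128) ≤ 1/128 := by
      calc (1 - r)^t1 * (D 0 - 1/128) ≤ (1 - r)^t1 * (n:ℝ)^2 := by
            apply mul_le_mul_of_nonneg_left _ hp0; linarith
        _ ≤ Real.exp (-(q * t1 / (4 * (n:ℝ)^2))) * (n:ℝ)^2 := by gcongr
        _ ≤ 1/128 := by linarith
    linarith
  have hpin := pinsker (univ : Finset (TState n k)) ((transQ n k ^ (t0+t1)) x) (Qpow_nonneg hn2 _ x) (Qpow_sum hn2 _ x)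
    (by intro z hz; exact absurd (mem_univ z) hz) (by
      simp only [hD, hDe] at hfin
      exact hfin)
  refine (tv_tri _ _ _).trans ((add_le_add hpin (tv_unif hk4)).trans ?_)
  norm_num


lemma ev_small : ∃ N : ℕ, ∀ n : ℕ, N ≤ n → 32 * (n:ℝ)^4 * (1/2)^(n/22) ≤ 1/512 := by
  have h1 := tendsto_pow_const_mul_const_pow_of_abs_lt_one 4 (show |(1/2:ℝ)| < 1 by rw [abs_of_pos] <;> norm_num)
  have h2 : ∀ᶠ j : ℕ in Filter.atTop, (j:ℝ)^4 * (1/2)^j < 1/(512 * 32 * 22^4 * 2) :=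
    h1.eventually (gt_mem_nhds (by norm_num))
  obtain ⟨J, hJ⟩ := Filter.eventually_atTop.1 h2
  refine ⟨22 * J, fun n hn => ?_⟩
  have hj : J ≤ n/22 + 1 := by omega
  have h3 := hJ _ hj
  have h4 : (n:ℝ) ≤ 22 * ((n/22 + 1 : ℕ):ℝ) := by exact_mod_cast (show n ≤ 22 * (n/22+1) by omega)
  rw [pow_succ ((1:ℝ)/2)] at h3
  set p := ((1:ℝ)/2)^(n/22) with hp
  have hp0 : 0 ≤ p := by positivity
  calc 32 * (n:ℝ)^4 * p ≤ 32 * (22 * ((n/22 + 1 : ℕ):ℝ))^4 * p := by gcongr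
    _ = (32 * 22^4 * 2) * ((((n/22 + 1 : ℕ):ℝ))^4 * (p * (1/2))) := by ring
    _ ≤ (32 * 22^4 * 2) * (1/(512 * 32 * 22^4 * 2)) := mul_le_mul_of_nonneg_left h3.le (by norm_num)
    _ = 1/512 := by norm_num

lemma mix_le {n k t : ℕ} (h : ∀ x ∈ Stief n k, tvDist ((transQ n k ^ t) x) (uF n k) ≤ 1/4) :
    mixTime (transQ n k) (unifOn (Stief n k)) (Stief n k) ≤ t := by
  unfold mixTime
  apply Nat.sInf_le
  intro x hx
  rw [uF_eq]; exact h x hx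

lemma small_case {n k : ℕ} (hk : 1 ≤ k) (hn : 2048 ≤ n) (hN : 32 * (n:ℝ)^4 * (1/2)^(n/22) ≤ 1/512)
    (hq : 2 ≤ n / (130 * k)) :
    (mixTime (transQ n k) (unifOn (Stief n k)) (Stief n k) : ℝ) ≤ 7100 * n * k * Real.log n := by
  set q := n / (130 * k) with hqd
  have hqn : 130 * (k * q) ≤ n := by
    have := Nat.mul_div_le n (130 * k)
    rw [← hqd] at this; rw [← mul_assoc]; exact this
  have hqu : n < 130 * (k * q) + 130 * k := by
    have := Nat.lt_mul_div_succ n (show 0 < 130 * k by omega)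
    rw [← hqd] at this
    calc n < _ := this
      _ = _ := by ring
  have hkq : 2 * k ≤ k * q := by nlinarith
  have hn195 : n ≤ 195 * (k * q) := by omega
  have hkn : k ≤ n := by omega
  set m := 10 * k * q with hmd
  have hm : m = 10 * (k * q) := by rw [hmd]; ring
  have hnR : (2048:ℝ) ≤ n := by exact_mod_cast hn
  have hn0 : (0:ℝ) < n := by linarith
  have hkR : (1:ℝ) ≤ k := by exact_mod_cast hk
  have hknR : (k:ℝ) ≤ n := by exact_mod_cast hkn
  have hmnR : (m:ℝ) ≤ n := by exact_mod_cast (show m ≤ n by omega)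
  have hlog : 1 ≤ Real.log n := by
    rw [Real.le_log_iff_exp_le hn0]
    have := Real.exp_one_lt_d9; linarith
  set t0 := ⌈8 * (n:ℝ) * (k + 4 * Real.log n)⌉₊ with ht0
  set t1 := ⌈2340 * (n:ℝ) * k * Real.log n⌉₊ with ht1
  have a0 : 8 * (n:ℝ) * (k + 4 * Real.log n) ≤ t0 := Nat.le_ceil _
  have a1 : 2340 * (n:ℝ) * k * Real.log n ≤ t1 := Nat.le_ceil _
  have b0 : (t0:ℝ) < 8 * (n:ℝ) * (k + 4 * Real.log n) + 1 := Nat.ceil_lt_add_one (by positivity)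
  have b1 : (t1:ℝ) < 2340 * (n:ℝ) * k * Real.log n + 1 := Nat.ceil_lt_add_one (by positivity)
  have hmix : mixTime (transQ n k) (unifOn (Stief n k)) (Stief n k) ≤ t0 + t1 := by
    apply mix_le
    intro x hx
    apply part1 hk hq (by rw [mul_assoc]; exact hqn) hx t0 t1
    · intro t ht
      have htR : (t0:ℝ) ≤ t := by exact_mod_cast ht
      have c1 := bad_bound (m := m) (by omega) ((transQ n k ^ t) x) (Qpow_nonneg (by omega) t x)
      have c2 := Phi_bound (m := m) (by omega) (by omega) hx t
      have c3 := log_NN n k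
      have hB0 : 0 ≤ ∑ z ∈ Bad m, (transQ n k ^ t) x z := Finset.sum_nonneg (fun z _ => Qpow_nonneg (by omega) t x z)
      have d1 : (2:ℝ)^k * (1/2)^m ≤ (1/2)^(n/22) := by
        have : m = k + (m - k) := by omega
        rw [this, pow_add, ← mul_assoc, ← mul_pow]
        have e : ((2:ℝ) * (1/2))^k = 1 := by norm_num
        rw [e, one_mul]
        exact pow_le_pow_of_le_one (by norm_num) (by norm_num) (by omega)
      have d2 : (2:ℝ)^k * Real.exp (-(t / (8 * (n:ℝ)))) ≤ 1 / (n:ℝ)^4 := by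
        have f1 : (k:ℝ) + 4 * Real.log n ≤ t / (8 * (n:ℝ)) := by
          rw [le_div_iff₀ (by linarith)]; linarith
        calc (2:ℝ)^k * Real.exp (-(t / (8 * (n:ℝ)))) ≤ Real.exp k * Real.exp (-(k + 4 * Real.log n)) := by
              gcongr; exact two_pow_le_exp k
          _ = Real.exp (-(4 * Real.log n)) := by rw [← Real.exp_add]; ring_nf
          _ = 1 / (n:ℝ)^4 := by
              rw [Real.exp_neg, one_div]
              congr 1
              have : 4 * Real.log n = Real.log ((n:ℝ)^4) := by rw [Real.log_pow]; norm_num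
              rw [this, Real.exp_log (by positivity)]
      have d3 : ∑ z ∈ Bad m, (transQ n k ^ t) x z ≤ n * (8 * n * (1/2)^(n/22) + 1 / (n:ℝ)^4) := by
        refine c1.trans ?_
        have g1 : ∑ z, (transQ n k ^ t) x z * Phi m z ≤ 8 * n * (1/2)^(n/22) + 1 / (n:ℝ)^4 := by
          have : 8 * (n:ℝ) * ((2:ℝ)^k * (1/2)^m) ≤ 8 * n * (1/2)^(n/22) := by gcongr
          linarith
        calc (m:ℝ) * ∑ z, (transQ n k ^ t) x z * Phi m z ≤ m * (8 * n * (1/2)^(n/22) + 1 / (n:ℝ)^4) := by gcongr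
          _ ≤ _ := by gcongr
      calc 4 * (Real.log (NN n k) * ∑ z ∈ Bad m, (transQ n k ^ t) x z) 
          ≤ 4 * (((n:ℝ) * n) * (n * (8 * n * (1/2)^(n/22) + 1 / (n:ℝ)^4))) := by
            have : Real.log (NN n k) ≤ (n:ℝ) * n := c3.trans (by gcongr)
            gcongr
        _ = 32 * (n:ℝ)^4 * (1/2)^(n/22) + 4 / n := by field_simp; ring
        _ ≤ 1/512 + 1/512 := by
            have : 4 / (n:ℝ) ≤ 1/512 := by rw [div_le_iff₀ hn0]; linarith
            linarith
        _ = 1/256 := by norm_num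
    · have hnq : (n:ℝ) ≤ 195 * (k * q) := by exact_mod_cast hn195
      have f1 : 3 * Real.log n ≤ q * t1 / (4 * (n:ℝ)^2) := by
        rw [le_div_iff₀ (by positivity)]
        calc 3 * Real.log n * (4 * (n:ℝ)^2) = 12 * n * Real.log n * n := by ring
          _ ≤ 12 * n * Real.log n * (195 * (k * q)) := by gcongr
          _ = q * (2340 * (n:ℝ) * k * Real.log n) := by ring
          _ ≤ q * t1 := by gcongr
      calc (n:ℝ)^2 * Real.exp (-(q * t1 / (4 * (n:ℝ)^2))) ≤ (n:ℝ)^2 * Real.exp (-(3 * Real.log n)) := by gcongr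
        _ = 1 / (n:ℝ) := by
            have : 3 * Real.log n = Real.log ((n:ℝ)^3) := by rw [Real.log_pow]; norm_num
            rw [Real.exp_neg, this, Real.exp_log (by positivity)]
            field_simp
        _ ≤ 1/128 := by
            apply div_le_div_of_nonneg_left <;> linarith
  have hmixR : (mixTime (transQ n k) (unifOn (Stief n k)) (Stief n k) : ℝ) ≤ t0 + t1 := by exact_mod_cast hmix
  have e1 : (n:ℝ) * k ≤ n * k * Real.log n := le_mul_of_one_le_right (by positivity) hlog
  have e2 : (n:ℝ) * Real.log n ≤ n * k * Real.log n := by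
    have : (n:ℝ) ≤ n * k := le_mul_of_one_le_right hn0.le hkR
    gcongr
  have e3 : 1 ≤ (n:ℝ) * k * Real.log n := by
    have : 1 ≤ (n:ℝ) * k := by nlinarith
    nlinarith
  nlinarith

lemma large_case {n k : ℕ} (hk : 1 ≤ k) (hkn : k ≤ n) (hn : 2048 ≤ n) 
    (hq : n / (130 * k) < 2) :
    (mixTime (transQ n k) (unifOn (Stief n k)) (Stief n k) : ℝ) ≤ 7100 * n * k * Real.log n := by
  have hn260 : n < 2 * (130 * k) := (Nat.div_lt_iff_lt_mul (by omega)).1 hq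
  have hnR : (2048:ℝ) ≤ n := by exact_mod_cast hn
  have hn0 : (0:ℝ) < n := by linarith
  have hkR : (1:ℝ) ≤ k := by exact_mod_cast hk
  have hnk : (n:ℝ) ≤ 260 * k := by exact_mod_cast (show n ≤ 260 * k by omega)
  have hlog : 1 ≤ Real.log n := by
    rw [Real.le_log_iff_exp_le hn0]
    have := Real.exp_one_lt_d9; linarith
  set t := ⌈27 * (n:ℝ)^2 * Real.log n⌉₊ with ht
  have a0 : 27 * (n:ℝ)^2 * Real.log n ≤ t := Nat.le_ceil _
  have b0 : (t:ℝ) < 27 * (n:ℝ)^2 * Real.log n + 1 := Nat.ceil_lt_add_one (by positivity)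
  have hmix : mixTime (transQ n k) (unifOn (Stief n k)) (Stief n k) ≤ t := by
    apply mix_le
    intro x hx
    refine (part2 n (by omega) t a0 (n - k) k (by omega) x hx).trans (by norm_num)
  have hmixR : (mixTime (transQ n k) (unifOn (Stief n k)) (Stief n k) : ℝ) ≤ t := by exact_mod_cast hmix
  have e3 : 1 ≤ (n:ℝ) * k * Real.log n := by
    have : 1 ≤ (n:ℝ) * k := by nlinarith
    nlinarith
  have e4 : 27 * (n:ℝ)^2 * Real.log n ≤ 7020 * (n * k * Real.log n) := by
    calc 27 * (n:ℝ)^2 * Real.log n = 27 * n * Real.log n * n := by ring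
      _ ≤ 27 * n * Real.log n * (260 * k) := by gcongr
      _ = _ := by ring
  nlinarith


theorem stmt0 (_B : ℝ) :
    ∃ C : ℝ, 0 < C ∧ ∃ N : ℕ, ∀ n : ℕ, N ≤ n → ∀ k : ℕ, 1 ≤ k → k ≤ n →
      (mixTime (transQ n k) (unifOn (Stief n k)) (Stief n k) : ℝ) ≤ C * n * k * Real.log n := by
  obtain ⟨N, hN⟩ := ev_small
  refine ⟨7100, by norm_num, max N 2048, fun n hn k hk hkn => ?_⟩
  have h1 : N ≤ n := le_trans (le_max_left _ _) hn
  have h2 : 2048 ≤ n := le_trans (le_max_right _ _) hn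
  by_cases hq : 2 ≤ n / (130 * k)
  · exact small_case hk h2 (hN n h1) hq
  · exact large_case hk hkn h2 (not_le.1 hq)
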